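/- arXiv:2302.08879 — 3 statements merged into one kernel-verified Lean document; each statement's English description precedes it below -/
import Mathlib

section
/- Let Φ = (φ_n)_{n∈N} be an ETF of N vectors in a complex inner product space spanning a subspace of dimension D with D < N, scaled so that |⟨φ_{n₁}, φ_{n₂}⟩| = 1 for all n₁ ≠ n₂, and let Ψ = (ψ_n)_{n∈N} be a dual of Φ. Suppose (N,(K_b)_{b∈B}) is a BIBD every block K_b of which belongs to bin(Φ). Then every member L of bin(Ψ) is an oval of this BIBD: L is nonempty and #(K_b ∩ L) ∈ {0, 2} for every b ∈ B. -/
open scoped BigOperators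

noncomputable section

/-- A finite family of vectors in an inner product space over `𝕜` is an
equiangular tight frame (ETF): equal norms, equal modulus of cross inner
products, and tightness (the Gram matrix `G` satisfies `G² = A·G`). -/
def IsETF (𝕜 : Type*) {E ι : Type*} [RCLike 𝕜] [NormedAddCommGroup E]
    [InnerProductSpace 𝕜 E] [Fintype ι] (φ : ι → E) : Prop :=
  (∃ S : ℝ, 0 < S ∧ ∀ n, (inner 𝕜 (φ n) (φ n) : 𝕜) = (S : 𝕜)) ∧
  (∃ C : ℝ, 0 < C ∧ ∀ n₁ n₂, n₁ ≠ n₂ → ‖(inner 𝕜 (φ n₁) (φ n₂) : 𝕜)‖ = C) ∧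
  (∃ A : ℝ, 0 < A ∧ ∀ n₁ n₃,
      (∑ n₂, (inner 𝕜 (φ n₁) (φ n₂) : 𝕜) * (inner 𝕜 (φ n₂) (φ n₃) : 𝕜)) =
        (A : 𝕜) * (inner 𝕜 (φ n₁) (φ n₃) : 𝕜))

/-- The subfamily of `φ` indexed by the finite set `K` is a regular simplex:
it is an ETF whose span has dimension one less than its number of vectors. -/
def IsRegularSimplex (𝕜 : Type*) {E ι : Type*} [RCLike 𝕜] [NormedAddCommGroup E]
    [InnerProductSpace 𝕜 E] [Fintype ι] (φ : ι → E) (K : Finset ι) : Prop :=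
  IsETF 𝕜 (fun k : K => φ k.1) ∧
  Module.finrank 𝕜 (Submodule.span 𝕜 (φ '' (K : Set ι))) + 1 = K.card

/-- The binder of a family: all index sets whose corresponding subfamily is a
regular simplex. -/
def binder (𝕜 : Type*) {E ι : Type*} [RCLike 𝕜] [NormedAddCommGroup E]
    [InnerProductSpace 𝕜 E] [Fintype ι] (φ : ι → E) : Set (Finset ι) :=
  {K | IsRegularSimplex 𝕜 φ K}

/-!
The Gram matrix `G` of an ETF satisfies `G² = A G`, so `A - G` is the Gram matrix of any dual, and
comparing traces with ranks shows that the ranks of `G` and `A - G` add up to the number of vectors.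
For a regular simplex `A - G` therefore has rank one, so its `2 × 2` minors vanish; this determines
the parameters and forces `⟪v i, v j⟫ ⟪v j, v k⟫ ⟪v k, v i⟫ = -C³` for distinct `i`, `j`, `k`.
Passing to a dual negates such triple products, so a block `K` of the design and a member `L` of the
dual binder share at most two vertices. Their norms give `N - 1 = (#K - 1) (#L - 1)`, and then
counting the blocks through a vertex of `L` leaves no room for one that meets `L` there only.
-/

section

open Finset Matrix Module
open scoped InnerProductSpace

section Matrix

variable {𝕜 κ : Type*} [Field 𝕜] [Fintype κ]

theorem trace_eq_mul_rank_of_mul_self_eq_smul {M : Matrix κ κ 𝕜} {a : 𝕜} (hM : M * M = a • M) :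
    M.trace = a * M.rank := by
  classical
  rcases eq_or_ne a 0 with rfl | ha
  · have hnil : IsNilpotent M := ⟨2, by rw [sq, hM, zero_smul]⟩
    rw [(isNilpotent_trace_of_isNilpotent hnil).eq_zero, zero_mul]
  have hidem : IsIdempotentElem (a⁻¹ • M.toLin') := by
    rw [IsIdempotentElem, ← map_smul, Module.End.mul_eq_comp, ← toLin'_mul, smul_mul_smul_comm, hM,
      smul_smul, inv_mul_cancel_right₀ ha]
  have hrange := (LinearMap.IsIdempotentElem.isProj_range _ hidem).trace
  rw [map_smul, trace_toLin'_eq, LinearMap.range_smul _ _ (inv_ne_zero ha), smul_eq_mul,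
    inv_mul_eq_iff_eq_mul₀ ha] at hrange
  exact hrange

theorem apply_mul_apply_comm_of_rank_le_one {μ : Type*} {M : Matrix μ κ 𝕜} (hM : M.rank ≤ 1)
    (i k : μ) (j l : κ) : M i j * M k l = M i l * M k j := by
  have := FiniteDimensional.span_of_finite 𝕜 (Set.finite_range M.col)
  rw [rank_eq_finrank_span_cols, finrank_le_one_iff] at hM
  obtain ⟨u, hu⟩ := hM
  have hcol (j : κ) : ∃ c : 𝕜, ∀ i, M i j = c * u.1 i := by
    obtain ⟨c, hc⟩ := hu ⟨M.col j, Submodule.subset_span ⟨j, rfl⟩⟩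
    exact ⟨c, fun i ↦ (congrFun (congrArg Subtype.val hc) i).symm⟩
  obtain ⟨c, hc⟩ := hcol j
  obtain ⟨d, hd⟩ := hcol l
  rw [hc, hd, hd, hc]
  ring

end Matrix

variable {𝕜 E F ι β : Type*} [RCLike 𝕜] [NormedAddCommGroup E] [InnerProductSpace 𝕜 E]
  [NormedAddCommGroup F] [InnerProductSpace 𝕜 F]

section Gram

variable [Fintype ι]

theorem rank_gram (v : ι → E) : (gram 𝕜 v).rank = finrank 𝕜 (Submodule.span 𝕜 (Set.range v)) := by
  classical
  set f := Fintype.linearCombination 𝕜 v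
  have hker : LinearMap.ker (gram 𝕜 v).mulVecLin = LinearMap.ker f := by
    ext x
    simp only [LinearMap.mem_ker, mulVecLin_apply, f, Fintype.linearCombination_apply]
    refine ⟨fun hx ↦ ?_, fun hx ↦ ?_⟩
    · rw [← inner_self_eq_zero (𝕜 := 𝕜), ← star_dotProduct_gram_mulVec, hx, dotProduct_zero]
    · ext i
      have hi := star_dotProduct_gram_mulVec (𝕜 := 𝕜) v (Pi.single i 1) x
      rw [hx, inner_zero_right] at hi
      simpa using hi
  have hgram := (gram 𝕜 v).mulVecLin.finrank_range_add_finrank_ker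
  have hf := f.finrank_range_add_finrank_ker
  rw [Fintype.range_linearCombination] at hf
  rw [hker] at hgram
  exact Nat.add_right_cancel (hgram.trans hf.symm)

/-- `φ` is an equiangular tight frame with squared norm `S`, coherence `C` and frame constant `A`:
`IsETF` with its parameters made explicit. -/
structure IsETFWith (𝕜 : Type*) {E ι : Type*} [RCLike 𝕜] [NormedAddCommGroup E]
    [InnerProductSpace 𝕜 E] [Fintype ι] (φ : ι → E) (S C A : ℝ) : Prop where
  S_pos : 0 < S
  C_pos : 0 < C
  A_pos : 0 < A
  inner_self n : ⟪φ n, φ n⟫_𝕜 = S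
  norm_inner : Pairwise fun m n ↦ ‖⟪φ m, φ n⟫_𝕜‖ = C
  gram_mul_gram : gram 𝕜 φ * gram 𝕜 φ = (A : 𝕜) • gram 𝕜 φ

theorem IsETF.exists_isETFWith {φ : ι → E} (hφ : IsETF 𝕜 φ) : ∃ S C A, IsETFWith 𝕜 φ S C A := by
  obtain ⟨⟨S, hS, hnorm⟩, ⟨C, hC, hinner⟩, ⟨A, hA, hgram⟩⟩ := hφ
  refine ⟨S, C, A, hS, hC, hA, hnorm, fun m n ↦ hinner m n, ?_⟩
  ext m n
  simpa only [mul_apply, gram_apply, Matrix.smul_apply, smul_eq_mul] using hgram m n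

/-- `ψ` is a dual (Naimark complement) of the family `φ`, whose `N` vectors span a space of
dimension `D`. The factor `(N - D) / D` is junk when `D = 0`, that is, when `φ = 0`. -/
structure IsNaimarkDual (𝕜 : Type*) {E F ι : Type*} [RCLike 𝕜] [NormedAddCommGroup E]
    [InnerProductSpace 𝕜 E] [NormedAddCommGroup F] [InnerProductSpace 𝕜 F] [Fintype ι]
    (φ : ι → E) (ψ : ι → F) : Prop where
  inner_self n : ⟪ψ n, ψ n⟫_𝕜 =
    (((Fintype.card ι - finrank 𝕜 (Submodule.span 𝕜 (Set.range φ))) /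
      finrank 𝕜 (Submodule.span 𝕜 (Set.range φ)) : ℝ) : 𝕜) * ⟪φ n, φ n⟫_𝕜
  inner_of_ne : Pairwise fun m n ↦ ⟪ψ m, ψ n⟫_𝕜 = -⟪φ m, φ n⟫_𝕜

namespace IsETFWith

variable {φ : ι → E} {S C A : ℝ}

theorem mul_finrank_span (hφ : IsETFWith 𝕜 φ S C A) :
    A * finrank 𝕜 (Submodule.span 𝕜 (Set.range φ)) = Fintype.card ι * S := by
  have htrace := trace_eq_mul_rank_of_mul_self_eq_smul hφ.gram_mul_gram
  simp only [trace, diag_apply, gram_apply, hφ.inner_self, rank_gram, sum_const, card_univ,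
    nsmul_eq_mul] at htrace
  exact_mod_cast htrace.symm

theorem inner_mul_inner_swap (hφ : IsETFWith 𝕜 φ S C A) {m n : ι} (hmn : m ≠ n) :
    ⟪φ m, φ n⟫_𝕜 * ⟪φ n, φ m⟫_𝕜 = (C : 𝕜) ^ 2 := by
  rw [← inner_conj_symm (φ n) (φ m), RCLike.mul_conj, hφ.norm_inner hmn]

theorem sq_add_card_sub_one_mul_sq [Nonempty ι] (hφ : IsETFWith 𝕜 φ S C A) :
    S ^ 2 + (Fintype.card ι - 1) * C ^ 2 = A * S := by
  classical
  obtain ⟨n⟩ := ‹Nonempty ι›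
  have hentry := congrFun₂ hφ.gram_mul_gram n n
  have hoff : ∀ m ∈ univ.erase n, ⟪φ n, φ m⟫_𝕜 * ⟪φ m, φ n⟫_𝕜 = (C : 𝕜) ^ 2 :=
    fun m hm ↦ hφ.inner_mul_inner_swap (ne_of_mem_erase hm).symm
  simp only [mul_apply, gram_apply, Matrix.smul_apply, smul_eq_mul] at hentry
  rw [← add_sum_erase _ _ (mem_univ n), sum_congr rfl hoff, hφ.inner_self, sum_const,
    nsmul_eq_mul, cast_card_erase_of_mem (mem_univ n), card_univ, ← sq] at hentry
  exact_mod_cast hentry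

theorem gram_dual (hφ : IsETFWith 𝕜 φ S C A) [DecidableEq ι] {ψ : ι → F}
    (hψ : IsNaimarkDual 𝕜 φ ψ) : gram 𝕜 ψ = (A : 𝕜) • 1 - gram 𝕜 φ := by
  ext m n
  rcases eq_or_ne m n with rfl | hmn
  · have := Nonempty.intro m
    have hcard : (0 : ℝ) < Fintype.card ι := by exact_mod_cast Fintype.card_pos
    have hA := hφ.mul_finrank_span
    have hD : (finrank 𝕜 (Submodule.span 𝕜 (Set.range φ)) : ℝ) ≠ 0 :=
      right_ne_zero_of_mul (hA.trans_ne (mul_pos hcard hφ.S_pos).ne')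
    have hnorm : ((Fintype.card ι - finrank 𝕜 (Submodule.span 𝕜 (Set.range φ))) /
        finrank 𝕜 (Submodule.span 𝕜 (Set.range φ)) : ℝ) * S = A - S := by
      field_simp
      linear_combination -hA
    simp only [gram_apply, hψ.inner_self, hφ.inner_self, Matrix.sub_apply, Matrix.smul_apply,
      one_apply_eq, smul_eq_mul, mul_one]
    exact_mod_cast hnorm
  · simp [hψ.inner_of_ne hmn, one_apply_ne hmn]

theorem rank_smul_one_sub_gram_add_finrank_span [DecidableEq ι] (hφ : IsETFWith 𝕜 φ S C A) :
    ((A : 𝕜) • 1 - gram 𝕜 φ).rank + finrank 𝕜 (Submodule.span 𝕜 (Set.range φ)) =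
      Fintype.card ι := by
  set B := (A : 𝕜) • 1 - gram 𝕜 φ with hB
  have hA : (A : 𝕜) ≠ 0 := RCLike.ofReal_ne_zero.mpr hφ.A_pos.ne'
  have hBB : B * B = (A : 𝕜) • B := by
    simp only [hB, sub_mul, mul_sub, smul_mul_assoc, mul_smul_comm, one_mul, mul_one,
      hφ.gram_mul_gram, smul_sub, sub_self, sub_zero]
  have htraceB := trace_eq_mul_rank_of_mul_self_eq_smul hBB
  have htraceG := trace_eq_mul_rank_of_mul_self_eq_smul hφ.gram_mul_gram
  rw [hB, trace_sub, trace_smul, trace_one, htraceG, rank_gram, smul_eq_mul, ← hB] at htraceB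
  have hcancel : (A : 𝕜) * (B.rank + finrank 𝕜 (Submodule.span 𝕜 (Set.range φ)) : 𝕜) =
      A * Fintype.card ι := by
    linear_combination -htraceB
  exact_mod_cast mul_left_cancel₀ hA hcancel

section Simplex

variable (hφ : IsETFWith 𝕜 φ S C A)
  (hrank : finrank 𝕜 (Submodule.span 𝕜 (Set.range φ)) + 1 = Fintype.card ι)

include hφ hrank

theorem A_eq_card_mul_sub_of_finrank_span_add_one : A = Fintype.card ι * (A - S) := by
  have hA := hφ.mul_finrank_span
  rw [← hrank] at hA ⊢
  push_cast at hA ⊢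
  linear_combination -hA

theorem one_lt_card_of_finrank_span_add_one : 1 < Fintype.card ι := by
  have hcard : (0 : ℝ) < Fintype.card ι := by exact_mod_cast (by lia : 0 < Fintype.card ι)
  have hpos : 0 < A * finrank 𝕜 (Submodule.span 𝕜 (Set.range φ)) :=
    hφ.mul_finrank_span ▸ mul_pos hcard hφ.S_pos
  have hfinrank : 0 < finrank 𝕜 (Submodule.span 𝕜 (Set.range φ)) := by
    exact_mod_cast pos_of_mul_pos_right hpos hφ.A_pos.le
  lia

theorem A_sub_S_eq_C_of_finrank_span_add_one : A - S = C := by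
  have hlt := hφ.one_lt_card_of_finrank_span_add_one hrank
  have := Fintype.card_pos_iff.mp (Nat.zero_lt_of_lt hlt)
  have hlt' : (1 : ℝ) < Fintype.card ι := by exact_mod_cast hlt
  have hA := hφ.A_eq_card_mul_sub_of_finrank_span_add_one hrank
  have hpos : 0 < A - S := pos_of_mul_pos_right (hA ▸ hφ.A_pos) (by positivity)
  have hsq : (Fintype.card ι - 1) * (A - S) ^ 2 = (Fintype.card ι - 1) * C ^ 2 := by
    linear_combination -hφ.sq_add_card_sub_one_mul_sq - (A - S) * hA
  exact (pow_left_inj₀ hpos.le hφ.C_pos.le two_ne_zero).mp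
    (mul_left_cancel₀ (sub_pos.mpr hlt').ne' hsq)

theorem S_eq_C_mul_card_sub_one_of_finrank_span_add_one : S = C * (Fintype.card ι - 1) := by
  have hC := hφ.A_sub_S_eq_C_of_finrank_span_add_one hrank
  have hA := hφ.A_eq_card_mul_sub_of_finrank_span_add_one hrank
  rw [hC] at hA
  linear_combination hA - hC

theorem inner_mul_inner_mul_inner_of_finrank_span_add_one {i j k : ι} (hij : i ≠ j) (hjk : j ≠ k)
    (hki : k ≠ i) : ⟪φ i, φ j⟫_𝕜 * ⟪φ j, φ k⟫_𝕜 * ⟪φ k, φ i⟫_𝕜 = -(C : 𝕜) ^ 3 := by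
  classical
  have hB : ((A : 𝕜) • 1 - gram 𝕜 φ).rank = 1 := by
    have := hφ.rank_smul_one_sub_gram_add_finrank_span
    lia
  have hdiag : (A : 𝕜) - S = C := by
    exact_mod_cast hφ.A_sub_S_eq_C_of_finrank_span_add_one hrank
  have hminor : ⟪φ i, φ j⟫_𝕜 * ⟪φ j, φ k⟫_𝕜 = -⟪φ i, φ k⟫_𝕜 * C := by
    simpa only [Matrix.sub_apply, Matrix.smul_apply, one_apply_ne hij, one_apply_ne hjk,
      one_apply_ne hki.symm, one_apply_eq, gram_apply, hφ.inner_self, smul_eq_mul, mul_zero,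
      mul_one, zero_sub, neg_mul_neg, hdiag] using apply_mul_apply_comm_of_rank_le_one hB.le i j j k
  rw [hminor]
  linear_combination -(C : 𝕜) * hφ.inner_mul_inner_swap hki.symm

end Simplex

end IsETFWith

namespace IsRegularSimplex

variable {v : ι → E} {K : Finset ι} {C : ℝ}

theorem exists_isETFWith (hK : IsRegularSimplex 𝕜 v K) : ∃ S C A,
    IsETFWith 𝕜 (fun k : K ↦ v k) S C A ∧
      finrank 𝕜 (Submodule.span 𝕜 (Set.range fun k : K ↦ v k)) + 1 = Fintype.card K := by
  obtain ⟨S, C, A, h⟩ := hK.1.exists_isETFWith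
  refine ⟨S, C, A, h, ?_⟩
  rw [Fintype.card_coe, ← hK.2, Set.image_eq_range]
  rfl

theorem one_lt_card (hK : IsRegularSimplex 𝕜 v K) : 1 < #K := by
  obtain ⟨S, C, A, h, hrank⟩ := hK.exists_isETFWith
  exact Fintype.card_coe K ▸ h.one_lt_card_of_finrank_span_add_one hrank

section Pairwise

variable (hK : IsRegularSimplex 𝕜 v K) (hC : Pairwise fun m n ↦ ‖⟪v m, v n⟫_𝕜‖ = C)

include hK hC

theorem exists_isETFWith_of_pairwise_norm_inner : ∃ S A,
    IsETFWith 𝕜 (fun k : K ↦ v k) S C A ∧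
      finrank 𝕜 (Submodule.span 𝕜 (Set.range fun k : K ↦ v k)) + 1 = Fintype.card K := by
  obtain ⟨S, C', A, h, hrank⟩ := hK.exists_isETFWith
  obtain ⟨i, hi, j, hj, hij⟩ := Finset.one_lt_card.mp hK.one_lt_card
  have hCC' : C' = C :=
    (h.norm_inner (i := ⟨i, hi⟩) (j := ⟨j, hj⟩) (by simpa using hij)).symm.trans (hC hij)
  exact ⟨S, A, hCC' ▸ h, hrank⟩

theorem inner_self_eq {k : ι} (hk : k ∈ K) : ⟪v k, v k⟫_𝕜 = ((C * (#K - 1) : ℝ) : 𝕜) := by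
  obtain ⟨S, A, h, hrank⟩ := hK.exists_isETFWith_of_pairwise_norm_inner hC
  rw [h.inner_self ⟨k, hk⟩, h.S_eq_C_mul_card_sub_one_of_finrank_span_add_one hrank,
    Fintype.card_coe]

theorem inner_mul_inner_mul_inner {i j k : ι} (hi : i ∈ K) (hj : j ∈ K) (hk : k ∈ K)
    (hij : i ≠ j) (hjk : j ≠ k) (hki : k ≠ i) :
    ⟪v i, v j⟫_𝕜 * ⟪v j, v k⟫_𝕜 * ⟪v k, v i⟫_𝕜 = -(C : 𝕜) ^ 3 := by
  obtain ⟨S, A, h, hrank⟩ := hK.exists_isETFWith_of_pairwise_norm_inner hC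
  exact h.inner_mul_inner_mul_inner_of_finrank_span_add_one hrank (i := ⟨i, hi⟩) (j := ⟨j, hj⟩)
    (k := ⟨k, hk⟩) (by simpa using hij) (by simpa using hjk) (by simpa using hki)

end Pairwise

end IsRegularSimplex

section Dual

variable {φ : ι → E} {ψ : ι → F} {K L : Finset ι} {S C A : ℝ}

theorem IsNaimarkDual.pairwise_norm_inner (hψ : IsNaimarkDual 𝕜 φ ψ)
    (hC : Pairwise fun m n ↦ ‖⟪φ m, φ n⟫_𝕜‖ = C) : Pairwise fun m n ↦ ‖⟪ψ m, ψ n⟫_𝕜‖ = C :=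
  fun m n hmn ↦ by simpa only [hψ.inner_of_ne hmn, norm_neg] using hC hmn

variable (hφ : IsETFWith 𝕜 φ S C A) (hψ : IsNaimarkDual 𝕜 φ ψ)

include hφ hψ

theorem card_inter_le_two_of_mem_binder [DecidableEq ι] (hK : K ∈ binder 𝕜 φ)
    (hL : L ∈ binder 𝕜 ψ) : #(K ∩ L) ≤ 2 := by
  by_contra! hcard
  obtain ⟨i, j, k, hi, hj, hk, hij, hik, hjk⟩ := two_lt_card_iff.mp hcard
  rw [mem_inter] at hi hj hk
  have hφtriple := hK.inner_mul_inner_mul_inner hφ.norm_inner hi.1 hj.1 hk.1 hij hjk hik.symm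
  have hψtriple := hL.inner_mul_inner_mul_inner (hψ.pairwise_norm_inner hφ.norm_inner)
    hi.2 hj.2 hk.2 hij hjk hik.symm
  rw [hψ.inner_of_ne hij, hψ.inner_of_ne hjk, hψ.inner_of_ne hik.symm, neg_mul_neg, mul_neg,
    hφtriple, neg_neg] at hψtriple
  have hC : (C : 𝕜) ^ 3 ≠ 0 := pow_ne_zero 3 (RCLike.ofReal_ne_zero.mpr hφ.C_pos.ne')
  exact hC (self_eq_neg.mp hψtriple)

theorem card_sub_one_eq_mul_of_mem_binder (hK : K ∈ binder 𝕜 φ) (hL : L ∈ binder 𝕜 ψ) :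
    Fintype.card ι - 1 = (#K - 1) * (#L - 1) := by
  classical
  obtain ⟨k, hk⟩ := card_pos.mp (Nat.zero_lt_of_lt hK.one_lt_card)
  obtain ⟨l, hl⟩ := card_pos.mp (Nat.zero_lt_of_lt hL.one_lt_card)
  have := Nonempty.intro k
  have hS : S = C * (#K - 1) := by
    exact_mod_cast (hφ.inner_self k).symm.trans (hK.inner_self_eq hφ.norm_inner hk)
  have hAS : A - S = C * (#L - 1) := by
    have hdiag := congrFun₂ (hφ.gram_dual hψ) l l
    rw [gram_apply, hL.inner_self_eq (hψ.pairwise_norm_inner hφ.norm_inner) hl, Matrix.sub_apply,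
      Matrix.smul_apply, one_apply_eq, gram_apply, hφ.inner_self, smul_eq_mul, mul_one] at hdiag
    exact_mod_cast hdiag.symm
  have hreal : (Fintype.card ι - 1 : ℝ) = (#K - 1) * (#L - 1) := by
    apply mul_left_cancel₀ (pow_ne_zero 2 hφ.C_pos.ne')
    linear_combination hφ.sq_add_card_sub_one_mul_sq + S * hAS + C * (#L - 1) * hS
  rw [← Nat.cast_pred Fintype.card_pos, ← Nat.cast_pred (card_pos.mpr ⟨k, hk⟩),
    ← Nat.cast_pred (card_pos.mpr ⟨l, hl⟩)] at hreal
  exact_mod_cast hreal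

end Dual

end Gram

section Design

variable [DecidableEq ι] [Fintype β]

/-- Every pair of distinct vertices lies in exactly `Λ` of the blocks `B b`. Unlike in a balanced
incomplete block design, the blocks may have different sizes. -/
def IsPairwiseBalanced (B : β → Finset ι) (Λ : ℕ) : Prop :=
  Pairwise fun x y ↦ #{b | x ∈ B b ∧ y ∈ B b} = Λ

/-- `L` is an oval of the incidence structure with blocks `B b`. -/
def IsOval (B : β → Finset ι) (L : Finset ι) : Prop :=
  L.Nonempty ∧ ∀ b, #(B b ∩ L) = 0 ∨ #(B b ∩ L) = 2

namespace IsPairwiseBalanced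

variable {B : β → Finset ι} {Λ : ℕ} {L : Finset ι} {l : ι}

theorem sum_card_inter (hB : IsPairwiseBalanced B Λ) (hl : l ∉ L) :
    ∑ b with l ∈ B b, #(B b ∩ L) = #L * Λ := by
  have hcount := sum_card_bipartiteAbove_eq_sum_card_bipartiteBelow (s := {b | l ∈ B b}) (t := L)
    fun b m ↦ m ∈ B b
  have hbelow : ∀ m ∈ L, #(bipartiteBelow (fun b m ↦ m ∈ B b) {b | l ∈ B b} m) = Λ := fun m hm ↦ by
    rw [bipartiteBelow, filter_filter, hB (ne_of_mem_of_not_mem hm hl).symm]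
  rw [sum_congr rfl hbelow, sum_const, smul_eq_mul] at hcount
  rw [← hcount]
  exact sum_congr rfl fun b _ ↦ by rw [bipartiteAbove, filter_mem_eq_inter, inter_comm]

theorem card_filter_mem_eq [Fintype ι] [Nontrivial ι] (hB : IsPairwiseBalanced B Λ)
    (hcard : ∀ b, Fintype.card ι - 1 = (#(B b) - 1) * (#L - 1)) (l : ι) :
    #{b | l ∈ B b} = (#L - 1) * Λ := by
  have hblock : ∀ b ∈ ({b | l ∈ B b} : Finset β), #(B b ∩ univ.erase l) = #(B b) - 1 :=
    fun b hb ↦ by rw [inter_erase, inter_univ, card_erase_of_mem (mem_filter.mp hb).2]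
  refine Nat.eq_of_mul_eq_mul_right (Nat.sub_pos_of_lt (Fintype.one_lt_card (α := ι))) ?_
  calc #{b | l ∈ B b} * (Fintype.card ι - 1)
      = ∑ b with l ∈ B b, (#(B b) - 1) * (#L - 1) := by
        rw [← smul_eq_mul, ← sum_const]
        exact sum_congr rfl fun b _ ↦ hcard b
    _ = (∑ b with l ∈ B b, #(B b ∩ univ.erase l)) * (#L - 1) := by
        rw [← sum_mul, sum_congr rfl hblock]
    _ = (#L - 1) * Λ * (Fintype.card ι - 1) := by
        rw [hB.sum_card_inter (notMem_erase l univ), card_erase_of_mem (mem_univ l), card_univ]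
        ring

theorem card_inter_eq_two [Fintype ι] [Nontrivial ι] (hB : IsPairwiseBalanced B Λ)
    (hcard : ∀ b, Fintype.card ι - 1 = (#(B b) - 1) * (#L - 1)) (hinter : ∀ b, #(B b ∩ L) ≤ 2)
    {b : β} (hlb : l ∈ B b) (hlL : l ∈ L) : #(B b ∩ L) = 2 := by
  have herase : ∀ c, l ∈ B c → #(B c ∩ L.erase l) + 1 = #(B c ∩ L) := fun c hlc ↦ by
    rw [inter_erase, card_erase_add_one (mem_inter.mpr ⟨hlc, hlL⟩)]
  have hle : ∀ c ∈ ({c | l ∈ B c} : Finset β), #(B c ∩ L.erase l) ≤ 1 := fun c hc ↦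
    Nat.le_of_succ_le_succ ((herase c (mem_filter.mp hc).2).trans_le (hinter c))
  have hsum : ∑ c with l ∈ B c, #(B c ∩ L.erase l) = ∑ c with l ∈ B c, 1 := by
    rw [hB.sum_card_inter (notMem_erase l L), card_erase_of_mem hlL, sum_const, smul_eq_mul,
      mul_one, hB.card_filter_mem_eq hcard]
  rw [← herase b hlb, (sum_eq_sum_iff_of_le hle).mp hsum b (by simpa using hlb)]

theorem isOval [Fintype ι] (hB : IsPairwiseBalanced B Λ) (hL : 1 < #L)
    (hcard : ∀ b, Fintype.card ι - 1 = (#(B b) - 1) * (#L - 1)) (hinter : ∀ b, #(B b ∩ L) ≤ 2) :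
    IsOval B L := by
  have : Nontrivial ι := Fintype.one_lt_card_iff_nontrivial.mp (hL.trans_le (card_le_univ L))
  refine ⟨card_pos.mp (Nat.zero_lt_of_lt hL), fun b ↦ ?_⟩
  rcases (B b ∩ L).eq_empty_or_nonempty with hempty | ⟨l, hl⟩
  · exact .inl (card_eq_zero.mpr hempty)
  · rw [mem_inter] at hl
    exact .inr (hB.card_inter_eq_two hcard hinter hl.1 hl.2)

end IsPairwiseBalanced

theorem binder_of_dual_is_oval_general [Fintype ι] {φ : ι → E} {ψ : ι → F} {B : β → Finset ι}
    {Λ : ℕ} {L : Finset ι} (hφ : IsETF 𝕜 φ) (hψ : IsNaimarkDual 𝕜 φ ψ)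
    (hB : IsPairwiseBalanced B Λ) (hbin : ∀ b, B b ∈ binder 𝕜 φ) (hL : L ∈ binder 𝕜 ψ) :
    IsOval B L := by
  obtain ⟨S, C, A, hφ⟩ := hφ.exists_isETFWith
  exact hB.isOval hL.one_lt_card
    (fun b ↦ card_sub_one_eq_mul_of_mem_binder hφ hψ (hbin b) hL)
    (fun b ↦ card_inter_le_two_of_mem_binder hφ hψ (hbin b) hL)

end Design

end

/-- If `Φ` is an `N`-vector complex ETF spanning a `D`-dimensional
space with `D < N`, scaled so its cross inner products are unimodular, `Ψ` is a
dual of `Φ`, and `(ι, Kb)` is a BIBD all of whose blocks belong to `bin(Φ)`, then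
every member of `bin(Ψ)` is an oval of this BIBD. -/
theorem binder_of_dual_is_oval
    {E F ι β : Type*} [NormedAddCommGroup E] [InnerProductSpace ℂ E]
    [NormedAddCommGroup F] [InnerProductSpace ℂ F]
    [Fintype ι] [DecidableEq ι] [Fintype β] [Nonempty β]
    (φ : ι → E) (ψ : ι → F) (D : ℕ) (S : ℝ)
    (hETF : IsETF ℂ φ)
    (hS : 0 < S) (hnorm : ∀ n, (inner ℂ (φ n) (φ n) : ℂ) = (S : ℂ))
    (hD : Module.finrank ℂ (Submodule.span ℂ (Set.range φ)) = D)
    (hDN : D < Fintype.card ι)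
    (hscale : ∀ n₁ n₂ : ι, n₁ ≠ n₂ → ‖(inner ℂ (φ n₁) (φ n₂) : ℂ)‖ = 1)
    (hdual_diag : ∀ n, (inner ℂ (ψ n) (ψ n) : ℂ) =
      (((((Fintype.card ι : ℝ) - D) * S / D : ℝ)) : ℂ))
    (hdual_off : ∀ n₁ n₂ : ι, n₁ ≠ n₂ →
      (inner ℂ (ψ n₁) (ψ n₂) : ℂ) = -(inner ℂ (φ n₁) (φ n₂) : ℂ))
    (K Λ : ℕ) (hK2 : 2 ≤ K) (hKV : K ≤ Fintype.card ι) (hΛ : 1 ≤ Λ)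
    (Kb : β → Finset ι) (hcard : ∀ b, (Kb b).card = K)
    (hBIBD : ∀ n₁ n₂ : ι, n₁ ≠ n₂ →
      (Finset.univ.filter (fun b => n₁ ∈ Kb b ∧ n₂ ∈ Kb b)).card = Λ)
    (hbin : ∀ b, Kb b ∈ binder ℂ φ)
    (L : Finset ι) (hL : L ∈ binder ℂ ψ) :
    L.Nonempty ∧ ∀ b, (Kb b ∩ L).card = 0 ∨ (Kb b ∩ L).card = 2 :=
  binder_of_dual_is_oval_general hETF
    ⟨fun n ↦ by rw [hdual_diag, hnorm, hD]; push_cast; ring, fun n₁ n₂ ↦ hdual_off n₁ n₂⟩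
    (fun n₁ n₂ ↦ hBIBD n₁ n₂) hbin hL
end
end

section
/- Let Φ = (φ_n)_{n∈N} be a doubly transitive ETF (DTETF): an ETF of N vectors spanning a space of dimension D < N whose symmetry group acts doubly transitively on the index set N, and let Ψ be a dual of Φ. If bin(Φ) is nonempty, then bin(Φ) forms a BIBD: all members of bin(Φ) have the same cardinality and there exists an integer Λ ≥ 1 such that every pair of distinct indices n₁ ≠ n₂ in N is contained in exactly Λ members of bin(Φ). Moreover, in this case every member L of bin(Ψ) is an oval of this BIBD: L is nonempty and #(K ∩ L) ∈ {0, 2} for every K ∈ bin(Φ). -/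
open scoped BigOperators

noncomputable section

/-!
A finite family of at least two vectors is a regular simplex if and only if its Gram matrix has the
form `C • (k • 1 - z zᴴ)` with `C > 0` and `z` a vector of `k` unimodular scalars: the linear
dependences form a line, so the Gram matrix of the Naimark complement has rank one. A symmetry only
rephases `z`, hence it permutes the binder, and double transitivity makes the number of blocks
through a pair constant. The block size `k` can be read off from the ratio `k - 1` of the norm
squared to the common modulus of the inner products.

Let `K` and `L` be members of the binders of `φ` and of its dual, with phases `z` and `w`, and put
`u i = conj (z i) * w i` for `i ∈ K ∩ L`. Pairing `∑ i ∈ K, z i • φ i = 0` with the dual dependence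
`∑ i ∈ L, w i • ψ i = 0` gives `∑ i ∈ K ∩ L, u i = 0`, while the opposite signs of the off-diagonal
inner products give `u j = -u i` for `i ≠ j`. Thus `(2 - #(K ∩ L)) * u i = 0` for every `i`.
-/

open Matrix
open scoped ComplexConjugate

section LinearDependence

variable {𝕜 E κ : Type*} [RCLike 𝕜] [NormedAddCommGroup E] [InnerProductSpace 𝕜 E] [Fintype κ]

theorem gram_mulVec_eq_inner_sum (φ : κ → E) (c : κ → 𝕜) (i : κ) :
    (gram 𝕜 φ *ᵥ c) i = inner 𝕜 (φ i) (∑ j, c j • φ j) := by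
  simp [mulVec, dotProduct, inner_sum, inner_smul_right, mul_comm]

theorem mem_ker_linearCombination_iff_gram_mulVec_eq_zero (φ : κ → E) (c : κ → 𝕜) :
    c ∈ LinearMap.ker (Fintype.linearCombination 𝕜 φ) ↔ gram 𝕜 φ *ᵥ c = 0 := by
  rw [LinearMap.mem_ker, Fintype.linearCombination_apply]
  refine ⟨fun h ↦ funext fun i ↦ ?_, fun h ↦ ?_⟩
  · rw [gram_mulVec_eq_inner_sum, h, inner_zero_right, Pi.zero_apply]
  · rw [← inner_self_eq_zero (𝕜 := 𝕜), ← star_dotProduct_gram_mulVec, h, dotProduct_zero]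

theorem finrank_span_range_add_one_eq_card_iff (φ : κ → E) :
    Module.finrank 𝕜 (Submodule.span 𝕜 (Set.range φ)) + 1 = Fintype.card κ ↔
      Module.finrank 𝕜 (LinearMap.ker (Fintype.linearCombination 𝕜 φ)) = 1 := by
  have rank_nullity := (Fintype.linearCombination 𝕜 φ).finrank_range_add_finrank_ker
  rw [Fintype.range_linearCombination, Module.finrank_fintype_fun_eq_card] at rank_nullity
  lia

theorem mul_eq_mul_of_mem_of_finrank_eq_one {R n : Type*} [Field R] {W : Submodule R (n → R)}
    (hW : Module.finrank R W = 1) {u v : n → R} (hu : u ∈ W) (hv : v ∈ W) (i j : n) :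
    u i * v j = u j * v i := by
  obtain ⟨w, -, hw⟩ := finrank_eq_one_iff'.mp hW
  obtain ⟨a, ha⟩ := hw ⟨u, hu⟩
  obtain ⟨b, hb⟩ := hw ⟨v, hv⟩
  obtain rfl : a • (w : n → R) = u := congrArg Subtype.val ha
  obtain rfl : b • (w : n → R) = v := congrArg Subtype.val hb
  simp only [Pi.smul_apply, smul_eq_mul]
  ring

end LinearDependence

section FiniteSets

variable {ι : Type*}

theorem card_eq_zero_or_two_of_sum_eq_zero {R : Type*} [Ring R] [NoZeroDivisors R] [CharZero R]
    {s : Finset ι} {u : ι → R} (u_ne_zero : ∀ i ∈ s, u i ≠ 0)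
    (hneg : ∀ i ∈ s, ∀ j ∈ s, i ≠ j → u j = -u i) (hsum : ∑ i ∈ s, u i = 0) :
    s.card = 0 ∨ s.card = 2 := by
  classical
  obtain rfl | ⟨i, hi⟩ := s.eq_empty_or_nonempty
  · exact .inl Finset.card_empty
  have off (j : ι) (hj : j ∈ s.erase i) : u j = -u i :=
    hneg i hi j (Finset.mem_of_mem_erase hj) (Finset.ne_of_mem_erase hj).symm
  rw [← Finset.add_sum_erase s u hi, Finset.sum_congr rfl off, Finset.sum_const, nsmul_eq_mul,
    Finset.cast_card_erase_of_mem hi] at hsum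
  have two_sub_card_mul : (2 - s.card : R) * u i = 0 := by
    rw [← hsum, mul_neg]
    noncomm_ring
  right
  have cast_card_eq := sub_eq_zero.mp
    ((mul_eq_zero.mp two_sub_card_mul).resolve_right (u_ne_zero i hi))
  exact_mod_cast cast_card_eq.symm

theorem exists_forall_ncard_pair_eq [Finite ι] {B : Set (Finset ι)}
    (hB : ∀ i j k l : ι, i ≠ j → k ≠ l → ∃ σ : Equiv.Perm ι,
      (∀ K ∈ B, K.map σ.toEmbedding ∈ B) ∧ σ i = k ∧ σ j = l)
    {K : Finset ι} (hK : K ∈ B) (two_le_card : 2 ≤ K.card) :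
    ∃ Λ : ℕ, 1 ≤ Λ ∧ ∀ i j : ι, i ≠ j → {K ∈ B | i ∈ K ∧ j ∈ K}.ncard = Λ := by
  have ncard_le (i j k l : ι) (hij : i ≠ j) (hkl : k ≠ l) :
      {K ∈ B | i ∈ K ∧ j ∈ K}.ncard ≤ {K ∈ B | k ∈ K ∧ l ∈ K}.ncard := by
    obtain ⟨σ, hσ, rfl, rfl⟩ := hB i j k l hij hkl
    refine Set.ncard_le_ncard_of_injOn (Finset.map σ.toEmbedding) ?_
      (Finset.map_injective σ.toEmbedding).injOn
    rintro K ⟨hK, hi, hj⟩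
    exact ⟨hσ K hK, Finset.mem_map_of_mem σ.toEmbedding hi, Finset.mem_map_of_mem σ.toEmbedding hj⟩
  obtain ⟨i, hi, j, hj, hij⟩ := Finset.one_lt_card.mp two_le_card
  refine ⟨{K ∈ B | i ∈ K ∧ j ∈ K}.ncard, ?_,
    fun k l hkl ↦ (ncard_le k l i j hkl hij).antisymm (ncard_le i j k l hij hkl)⟩
  exact (Set.ncard_pos (Set.toFinite _)).mpr ⟨K, hK, hi, hj⟩

end FiniteSets

/-- The vector `z` of unimodular scalars and the scale `C` put the Gram matrix of the family `φ`
into the normal form `C • (card κ • 1 - z zᴴ)` of a regular simplex. -/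
structure IsSimplexPhase {𝕜 E κ : Type*} [RCLike 𝕜] [NormedAddCommGroup E]
    [InnerProductSpace 𝕜 E] [Fintype κ] (φ : κ → E) (C : ℝ) (z : κ → 𝕜) : Prop where
  norm_eq_one : ∀ i, ‖z i‖ = 1
  inner_self : ∀ i, inner 𝕜 (φ i) (φ i) = (((Fintype.card κ - 1) * C : ℝ) : 𝕜)
  inner_of_ne : ∀ i j, i ≠ j → inner 𝕜 (φ i) (φ j) = -(C * (z i * conj (z j)))

namespace IsSimplexPhase

variable {𝕜 E κ : Type*} [RCLike 𝕜] [NormedAddCommGroup E] [InnerProductSpace 𝕜 E] [Fintype κ]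
  {φ : κ → E} {C : ℝ} {z : κ → 𝕜}

theorem mul_conj (h : IsSimplexPhase φ C z) (i : κ) : z i * conj (z i) = 1 := by
  simp [RCLike.mul_conj, h.norm_eq_one]

theorem conj_mul (h : IsSimplexPhase φ C z) (i : κ) : conj (z i) * z i = 1 := by
  simp [RCLike.conj_mul, h.norm_eq_one]

theorem star_dotProduct_self (h : IsSimplexPhase φ C z) : star z ⬝ᵥ z = Fintype.card κ := by
  simp [dotProduct, h.conj_mul]

theorem norm_inner_of_ne (h : IsSimplexPhase φ C z) (hC : 0 ≤ C) {i j : κ} (hij : i ≠ j) :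
    ‖inner 𝕜 (φ i) (φ j)‖ = C := by
  simp [h.inner_of_ne i j hij, h.norm_eq_one, hC]

theorem gram_eq [DecidableEq κ] (h : IsSimplexPhase φ C z) :
    gram 𝕜 φ = (C : 𝕜) • ((Fintype.card κ : 𝕜) • 1 - vecMulVec z (star z)) := by
  ext i j
  rw [gram_apply, Matrix.smul_apply, Matrix.sub_apply, Matrix.smul_apply, vecMulVec_apply,
    Pi.star_apply, RCLike.star_def, smul_eq_mul, smul_eq_mul]
  obtain rfl | hij := eq_or_ne i j
  · rw [one_apply_eq, h.inner_self, h.mul_conj]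
    push_cast
    ring
  · rw [one_apply_ne hij, h.inner_of_ne i j hij]
    ring

theorem gram_mulVec (h : IsSimplexPhase φ C z) (c : κ → 𝕜) :
    gram 𝕜 φ *ᵥ c = (C : 𝕜) • ((Fintype.card κ : 𝕜) • c - (star z ⬝ᵥ c) • z) := by
  classical
  rw [h.gram_eq, smul_mulVec, sub_mulVec, smul_mulVec, one_mulVec, vecMulVec_mulVec,
    op_smul_eq_smul]

theorem gram_mulVec_self (h : IsSimplexPhase φ C z) : gram 𝕜 φ *ᵥ z = 0 := by
  rw [h.gram_mulVec, h.star_dotProduct_self, sub_self, smul_zero]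

theorem sum_smul_eq_zero (h : IsSimplexPhase φ C z) : ∑ i, z i • φ i = 0 := by
  rw [← Fintype.linearCombination_apply 𝕜, ← LinearMap.mem_ker,
    mem_ker_linearCombination_iff_gram_mulVec_eq_zero, h.gram_mulVec_self]

theorem gram_mul_gram (h : IsSimplexPhase φ C z) :
    gram 𝕜 φ * gram 𝕜 φ = ((Fintype.card κ * C : ℝ) : 𝕜) • gram 𝕜 φ := by
  classical
  calc gram 𝕜 φ * gram 𝕜 φ
      = gram 𝕜 φ * ((C : 𝕜) • ((Fintype.card κ : 𝕜) • 1 - vecMulVec z (star z))) := by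
        rw [← h.gram_eq]
    _ = (C : 𝕜) • (Fintype.card κ : 𝕜) • gram 𝕜 φ := by
        rw [Matrix.mul_smul, Matrix.mul_sub, Matrix.mul_smul, Matrix.mul_one, mul_vecMulVec,
          h.gram_mulVec_self, zero_vecMulVec, sub_zero]
    _ = ((Fintype.card κ * C : ℝ) : 𝕜) • gram 𝕜 φ := by
        rw [smul_smul, mul_comm]
        push_cast
        rfl

theorem ker_linearCombination_eq_span (h : IsSimplexPhase φ C z) (hC : C ≠ 0) [Nonempty κ] :
    LinearMap.ker (Fintype.linearCombination 𝕜 φ) = 𝕜 ∙ z := by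
  ext c
  rw [mem_ker_linearCombination_iff_gram_mulVec_eq_zero, Submodule.mem_span_singleton]
  constructor
  · intro hc
    rw [h.gram_mulVec, smul_eq_zero_iff_right (RCLike.ofReal_ne_zero.mpr hC), sub_eq_zero] at hc
    refine ⟨(Fintype.card κ : 𝕜)⁻¹ * (star z ⬝ᵥ c), ?_⟩
    rw [mul_smul, ← hc, inv_smul_smul₀ (Nat.cast_ne_zero.mpr Fintype.card_ne_zero)]
  · rintro ⟨a, rfl⟩
    rw [mulVec_smul, h.gram_mulVec_self, smul_zero]

theorem finrank_span_range_add_one_eq_card (h : IsSimplexPhase φ C z) (hC : C ≠ 0)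
    [Nonempty κ] : Module.finrank 𝕜 (Submodule.span 𝕜 (Set.range φ)) + 1 = Fintype.card κ := by
  obtain ⟨i⟩ := ‹Nonempty κ›
  have z_ne_zero : z ≠ 0 := fun hz ↦ by simpa [hz] using h.norm_eq_one i
  rw [finrank_span_range_add_one_eq_card_iff, h.ker_linearCombination_eq_span hC,
    finrank_span_singleton z_ne_zero]

theorem isETF (h : IsSimplexPhase φ C z) (hC : 0 < C) (hκ : 2 ≤ Fintype.card κ) :
    IsETF 𝕜 φ := by
  have hκ' : (2 : ℝ) ≤ Fintype.card κ := by exact_mod_cast hκ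
  refine ⟨⟨_, mul_pos (by linarith) hC, h.inner_self⟩,
    ⟨C, hC, fun _ _ hij ↦ h.norm_inner_of_ne hC.le hij⟩,
    ⟨Fintype.card κ * C, mul_pos (by linarith) hC, fun i j ↦ ?_⟩⟩
  exact congrFun₂ h.gram_mul_gram i j

end IsSimplexPhase

section TightFrame

variable {𝕜 E κ : Type*} [RCLike 𝕜] [NormedAddCommGroup E] [InnerProductSpace 𝕜 E]
  [DecidableEq κ]

/-- The Gram matrix of a Naimark complement of a tight frame `φ` with frame constant `A`. It is
normalised so that its off-diagonal entries are the negatives of those of the Gram matrix of `φ`,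
and `A` is an element of the scalar field rather than a real number. -/
def naimarkGram (φ : κ → E) (A : 𝕜) : Matrix κ κ 𝕜 := A • 1 - gram 𝕜 φ

theorem naimarkGram_apply_self (φ : κ → E) (A : 𝕜) (i : κ) :
    naimarkGram φ A i i = A - inner 𝕜 (φ i) (φ i) := by
  simp [naimarkGram]

theorem naimarkGram_apply_of_ne (φ : κ → E) (A : 𝕜) {i j : κ} (hij : i ≠ j) :
    naimarkGram φ A i j = -inner 𝕜 (φ i) (φ j) := by
  simp [naimarkGram, hij]

theorem conj_naimarkGram_apply (φ : κ → E) (A : ℝ) (i j : κ) :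
    conj (naimarkGram φ (A : 𝕜) i j) = naimarkGram φ (A : 𝕜) j i := by
  obtain rfl | hij := eq_or_ne i j
  · simp [naimarkGram_apply_self]
  · simp [naimarkGram_apply_of_ne, hij, hij.symm]

variable [Fintype κ] {φ : κ → E}

theorem gram_mul_naimarkGram {A : 𝕜} (hA : gram 𝕜 φ * gram 𝕜 φ = A • gram 𝕜 φ) :
    gram 𝕜 φ * naimarkGram φ A = 0 := by
  rw [naimarkGram, Matrix.mul_sub, Matrix.mul_smul, Matrix.mul_one, hA, sub_self]

theorem naimarkGram_mul_eq_mul {A : 𝕜} (hA : gram 𝕜 φ * gram 𝕜 φ = A • gram 𝕜 φ)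
    (hrank : Module.finrank 𝕜 (Submodule.span 𝕜 (Set.range φ)) + 1 = Fintype.card κ)
    (i j k l : κ) :
    naimarkGram φ A i j * naimarkGram φ A k l = naimarkGram φ A k j * naimarkGram φ A i l := by
  -- The columns of the complementary Gram matrix are linear dependences among the vectors of `φ`,
  -- and these form a line.
  have col_mem (m : κ) :
      (naimarkGram φ A).col m ∈ LinearMap.ker (Fintype.linearCombination 𝕜 φ) := by
    rw [mem_ker_linearCombination_iff_gram_mulVec_eq_zero]
    exact funext fun n ↦ congrFun₂ (gram_mul_naimarkGram hA) n m
  exact mul_eq_mul_of_mem_of_finrank_eq_one ((finrank_span_range_add_one_eq_card_iff φ).mp hrank)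
    (col_mem j) (col_mem l) i k

end TightFrame

section RegularSimplex

variable {𝕜 E κ : Type*} [RCLike 𝕜] [NormedAddCommGroup E] [InnerProductSpace 𝕜 E] [Fintype κ]
  {φ : κ → E}

theorem two_le_card_of_finrank_span_range_add_one_eq (hφ : ∀ i, φ i ≠ 0)
    (hrank : Module.finrank 𝕜 (Submodule.span 𝕜 (Set.range φ)) + 1 = Fintype.card κ) :
    2 ≤ Fintype.card κ := by
  obtain ⟨i⟩ : Nonempty κ := Fintype.card_pos_iff.mp (by lia)
  have : Nontrivial (Submodule.span 𝕜 (Set.range φ)) :=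
    ⟨⟨φ i, Submodule.subset_span ⟨i, rfl⟩⟩, 0, fun h ↦ hφ i (congrArg Subtype.val h)⟩
  have := FiniteDimensional.span_of_finite 𝕜 (Set.finite_range φ)
  have : 0 < Module.finrank 𝕜 (Submodule.span 𝕜 (Set.range φ)) := Module.finrank_pos
  lia

theorem sq_add_card_sub_one_mul_sq_eq {S C A : ℝ} (hS : ∀ i, inner 𝕜 (φ i) (φ i) = (S : 𝕜))
    (hC : ∀ i j, i ≠ j → ‖inner 𝕜 (φ i) (φ j)‖ = C)
    (hA : gram 𝕜 φ * gram 𝕜 φ = (A : 𝕜) • gram 𝕜 φ) (i : κ) :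
    S ^ 2 + (Fintype.card κ - 1) * C ^ 2 = A * S := by
  classical
  have offdiag (j : κ) (hj : j ∈ Finset.univ.erase i) :
      inner 𝕜 (φ i) (φ j) * inner 𝕜 (φ j) (φ i) = (C : 𝕜) ^ 2 := by
    rw [← inner_conj_symm (φ j), RCLike.mul_conj, hC i j (Finset.ne_of_mem_erase hj).symm]
  have diagonal := congrFun₂ hA i i
  rw [mul_apply, Matrix.smul_apply, smul_eq_mul, ← Finset.add_sum_erase _ _ (Finset.mem_univ i)]
    at diagonal
  simp only [gram_apply] at diagonal
  rw [Finset.sum_congr rfl offdiag, hS, Finset.sum_const, nsmul_eq_mul,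
    Finset.cast_card_erase_of_mem (Finset.mem_univ i), Finset.card_univ, ← sq] at diagonal
  exact_mod_cast diagonal

theorem frameConst_sub_eq_and_normSq_eq {S C A : ℝ} (hSpos : 0 < S) (hCpos : 0 < C)
    (hS : ∀ i, inner 𝕜 (φ i) (φ i) = (S : 𝕜))
    (hC : ∀ i j, i ≠ j → ‖inner 𝕜 (φ i) (φ j)‖ = C)
    (hA : gram 𝕜 φ * gram 𝕜 φ = (A : 𝕜) • gram 𝕜 φ)
    (hrank : Module.finrank 𝕜 (Submodule.span 𝕜 (Set.range φ)) + 1 = Fintype.card κ)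
    (hκ : 2 ≤ Fintype.card κ) :
    A - S = C ∧ S = (Fintype.card κ - 1) * C := by
  classical
  obtain ⟨i, j, hij⟩ := Fintype.one_lt_card_iff.mp hκ
  have hκ' : (2 : ℝ) ≤ Fintype.card κ := by exact_mod_cast hκ
  have diagonal := sq_add_card_sub_one_mul_sq_eq hS hC hA i
  have sq_eq_sq : (A - S) ^ 2 = C ^ 2 := by
    have minor := naimarkGram_mul_eq_mul hA hrank i i j j
    rw [← conj_naimarkGram_apply φ A i j, RCLike.conj_mul, naimarkGram_apply_of_ne φ _ hij,
      naimarkGram_apply_self, naimarkGram_apply_self, hS, hS, norm_neg, hC i j hij, ← sq] at minor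
    exact_mod_cast minor
  have sub_pos : 0 < A - S := by
    have : 0 < S * (A - S) := by
      calc 0 < (Fintype.card κ - 1) * C ^ 2 := mul_pos (by linarith) (by positivity)
        _ = S * (A - S) := by linear_combination diagonal
    exact pos_of_mul_pos_right this hSpos.le
  have sub_eq : A - S = C := (pow_left_inj₀ sub_pos.le hCpos.le two_ne_zero).mp sq_eq_sq
  refine ⟨sub_eq, mul_right_cancel₀ hCpos.ne' ?_⟩
  linear_combination -S * sub_eq - diagonal

theorem IsETF.ne_zero (hφ : IsETF 𝕜 φ) (i : κ) : φ i ≠ 0 := by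
  obtain ⟨⟨S, hS, inner_self⟩, -⟩ := hφ
  rw [← inner_self_ne_zero (𝕜 := 𝕜), inner_self i]
  exact RCLike.ofReal_ne_zero.mpr hS.ne'

theorem IsETF.exists_isSimplexPhase (hφ : IsETF 𝕜 φ)
    (hrank : Module.finrank 𝕜 (Submodule.span 𝕜 (Set.range φ)) + 1 = Fintype.card κ) :
    ∃ C : ℝ, 0 < C ∧ ∃ z : κ → 𝕜, IsSimplexPhase φ C z := by
  classical
  have hκ := two_le_card_of_finrank_span_range_add_one_eq hφ.ne_zero hrank
  obtain ⟨⟨S, hSpos, hS⟩, ⟨C, hCpos, hC⟩, A, -, hA⟩ := hφ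
  replace hA : gram 𝕜 φ * gram 𝕜 φ = (A : 𝕜) • gram 𝕜 φ := Matrix.ext hA
  obtain ⟨sub_eq, S_eq⟩ := frameConst_sub_eq_and_normSq_eq hSpos hCpos hS hC hA hrank hκ
  have C_ne_zero : (C : 𝕜) ≠ 0 := RCLike.ofReal_ne_zero.mpr hCpos.ne'
  have diagonal (i : κ) : naimarkGram φ (A : 𝕜) i i = C := by
    rw [naimarkGram_apply_self, hS, ← sub_eq, RCLike.ofReal_sub]
  have norm_entry (i j : κ) : ‖naimarkGram φ (A : 𝕜) i j‖ = C := by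
    obtain rfl | hij := eq_or_ne i j
    · rw [diagonal, RCLike.norm_of_nonneg hCpos.le]
    · rw [naimarkGram_apply_of_ne φ _ hij, norm_neg, hC i j hij]
  obtain ⟨m⟩ : Nonempty κ := Fintype.card_pos_iff.mp (by lia)
  refine ⟨C, hCpos, fun i ↦ naimarkGram φ (A : 𝕜) i m / C, ⟨fun i ↦ ?_, fun i ↦ ?_, ?_⟩⟩
  · rw [norm_div, norm_entry, RCLike.norm_of_nonneg hCpos.le, div_self hCpos.ne']
  · rw [hS, S_eq]
  · intro i j hij
    have minor := naimarkGram_mul_eq_mul hA hrank i j m m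
    rw [diagonal, naimarkGram_apply_of_ne φ _ hij] at minor
    rw [map_div₀, RCLike.conj_ofReal, conj_naimarkGram_apply]
    field_simp
    linear_combination -minor

theorem isETF_and_finrank_iff_exists_isSimplexPhase :
    IsETF 𝕜 φ ∧ Module.finrank 𝕜 (Submodule.span 𝕜 (Set.range φ)) + 1 = Fintype.card κ ↔
      2 ≤ Fintype.card κ ∧ ∃ C : ℝ, 0 < C ∧ ∃ z : κ → 𝕜, IsSimplexPhase φ C z := by
  constructor
  · rintro ⟨hφ, hrank⟩
    exact ⟨two_le_card_of_finrank_span_range_add_one_eq hφ.ne_zero hrank,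
      hφ.exists_isSimplexPhase hrank⟩
  · rintro ⟨two_le_card, C, hC, z, hz⟩
    have : Nonempty κ := Fintype.card_pos_iff.mp (by lia)
    exact ⟨hz.isETF hC two_le_card, hz.finrank_span_range_add_one_eq_card hC.ne'⟩

end RegularSimplex

section Binder

variable {𝕜 E F ι : Type*} [RCLike 𝕜] [NormedAddCommGroup E] [InnerProductSpace 𝕜 E]
  [NormedAddCommGroup F] [InnerProductSpace 𝕜 F]

theorem isSimplexPhase_restrict_iff {φ : ι → E} {K : Finset ι} {C : ℝ} {z : ι → 𝕜} :
    IsSimplexPhase (fun k : K ↦ φ k) C (fun k : K ↦ z k) ↔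
      (∀ i ∈ K, ‖z i‖ = 1) ∧
      (∀ i ∈ K, inner 𝕜 (φ i) (φ i) = (((K.card - 1) * C : ℝ) : 𝕜)) ∧
      ∀ i ∈ K, ∀ j ∈ K, i ≠ j → inner 𝕜 (φ i) (φ j) = -(C * (z i * conj (z j))) := by
  rw [← Fintype.card_coe K]
  refine ⟨fun h ↦ ⟨fun i hi ↦ h.norm_eq_one ⟨i, hi⟩, fun i hi ↦ h.inner_self ⟨i, hi⟩,
    fun i hi j hj hij ↦ h.inner_of_ne ⟨i, hi⟩ ⟨j, hj⟩ (Subtype.coe_ne_coe.mp hij)⟩, ?_⟩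
  rintro ⟨norm_eq_one, inner_self, inner_of_ne⟩
  exact ⟨fun i ↦ norm_eq_one i i.2, fun i ↦ inner_self i i.2,
    fun i j hij ↦ inner_of_ne i i.2 j j.2 (Subtype.coe_ne_coe.mpr hij)⟩

theorem isRegularSimplex_iff_exists_isSimplexPhase [Fintype ι] {φ : ι → E} {K : Finset ι} :
    IsRegularSimplex 𝕜 φ K ↔
      2 ≤ K.card ∧ ∃ C : ℝ, 0 < C ∧ ∃ z : ι → 𝕜,
        IsSimplexPhase (fun k : K ↦ φ k) C (fun k : K ↦ z k) := by
  have extend_phase (C : ℝ) :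
      (∃ z : K → 𝕜, IsSimplexPhase (fun k : K ↦ φ k) C z) ↔
        ∃ z : ι → 𝕜, IsSimplexPhase (fun k : K ↦ φ k) C (fun k : K ↦ z k) := by
    refine ⟨fun ⟨z, hz⟩ ↦ ⟨Function.extend Subtype.val z 0, ?_⟩, fun ⟨z, hz⟩ ↦ ⟨_, hz⟩⟩
    simpa only [Subtype.val_injective.extend_apply] using hz
  rw [IsRegularSimplex, Set.image_eq_range, ← Fintype.card_coe K]
  simp_rw [← extend_phase]
  exact isETF_and_finrank_iff_exists_isSimplexPhase

theorem IsRegularSimplex.two_le_card [Fintype ι] {φ : ι → E} {K : Finset ι}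
    (hK : IsRegularSimplex 𝕜 φ K) : 2 ≤ K.card :=
  (isRegularSimplex_iff_exists_isSimplexPhase.mp hK).1

theorem IsRegularSimplex.card_eq_card [Fintype ι] {φ : ι → E} {S C : ℝ}
    (hS : ∀ i, inner 𝕜 (φ i) (φ i) = (S : 𝕜))
    (hC : ∀ i j, i ≠ j → ‖inner 𝕜 (φ i) (φ j)‖ = C) {K L : Finset ι}
    (hK : IsRegularSimplex 𝕜 φ K) (hL : IsRegularSimplex 𝕜 φ L) : K.card = L.card := by
  have norm_sq_eq {K : Finset ι} (hK : IsRegularSimplex 𝕜 φ K) :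
      0 < C ∧ S = (K.card - 1) * C := by
    obtain ⟨two_le_card, C', hC', z, hz⟩ := isRegularSimplex_iff_exists_isSimplexPhase.mp hK
    obtain ⟨i, hi, j, hj, hij⟩ := Finset.one_lt_card.mp two_le_card
    obtain rfl : C = C' := by
      rw [← hC i j hij]
      exact hz.norm_inner_of_ne hC'.le (i := ⟨i, hi⟩) (j := ⟨j, hj⟩) (by simpa using hij)
    have inner_self := hz.inner_self ⟨i, hi⟩
    rw [hS, RCLike.ofReal_inj, Fintype.card_coe] at inner_self
    exact ⟨hC', inner_self⟩
  obtain ⟨hC, hSK⟩ := norm_sq_eq hK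
  obtain ⟨-, hSL⟩ := norm_sq_eq hL
  have cast_card_eq := sub_left_inj.mp (mul_right_cancel₀ hC.ne' (hSK.symm.trans hSL))
  exact_mod_cast cast_card_eq

/-- The symmetries of an equal-norm family: permutations of its indices that preserve the
off-diagonal inner products up to unimodular scalars. -/
def IsSymmetry (𝕜 : Type*) {E ι : Type*} [RCLike 𝕜] [NormedAddCommGroup E]
    [InnerProductSpace 𝕜 E] (φ : ι → E) (σ : Equiv.Perm ι) : Prop :=
  ∃ z : ι → 𝕜, (∀ i, ‖z i‖ = 1) ∧
    ∀ i j, i ≠ j → inner 𝕜 (φ (σ i)) (φ (σ j)) = conj (z i) * z j * inner 𝕜 (φ i) (φ j)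

theorem IsSymmetry.norm_inner_eq {φ : ι → E} {σ : Equiv.Perm ι} (hσ : IsSymmetry 𝕜 φ σ)
    {i j : ι} (hij : i ≠ j) : ‖inner 𝕜 (φ (σ i)) (φ (σ j))‖ = ‖inner 𝕜 (φ i) (φ j)‖ := by
  obtain ⟨z, hz, inner_eq⟩ := hσ
  simp [inner_eq i j hij, hz]

theorem IsSymmetry.map_mem_binder [Fintype ι] {φ : ι → E} {S : 𝕜}
    (hS : ∀ i, inner 𝕜 (φ i) (φ i) = S) {σ : Equiv.Perm ι} (hσ : IsSymmetry 𝕜 φ σ)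
    {K : Finset ι} (hK : K ∈ binder 𝕜 φ) : K.map σ.toEmbedding ∈ binder 𝕜 φ := by
  obtain ⟨y, hy, inner_eq⟩ := hσ
  obtain ⟨two_le_card, C, hC, z, hz⟩ := isRegularSimplex_iff_exists_isSimplexPhase.mp hK
  obtain ⟨norm_eq_one, inner_self, inner_of_ne⟩ := isSimplexPhase_restrict_iff.mp hz
  refine isRegularSimplex_iff_exists_isSimplexPhase.mpr
    ⟨by rwa [Finset.card_map], C, hC, fun i ↦ conj (y (σ.symm i)) * z (σ.symm i), ?_⟩
  rw [isSimplexPhase_restrict_iff (z := fun i ↦ conj (y (σ.symm i)) * z (σ.symm i))]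
  simp only [Finset.forall_mem_map, Equiv.coe_toEmbedding, Equiv.symm_apply_apply, Finset.card_map]
  refine ⟨fun i hi ↦ ?_, fun i hi ↦ ?_, fun i hi j hj hij ↦ ?_⟩
  · rw [norm_mul, RCLike.norm_conj, hy, norm_eq_one i hi, one_mul]
  · rw [hS, ← hS i, inner_self i hi]
  · have hij : i ≠ j := ne_of_apply_ne σ hij
    rw [inner_eq i j hij, inner_of_ne i hi j hj hij, map_mul, RCLike.conj_conj]
    ring

theorem sum_inter_eq_zero_of_sum_smul_eq_zero [DecidableEq ι] {φ : ι → E} {ψ : ι → F}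
    (hdual : ∀ i j, i ≠ j → inner 𝕜 (ψ i) (ψ j) = -inner 𝕜 (φ i) (φ j))
    {K L : Finset ι} {a b : ι → 𝕜}
    (ha : ∑ i ∈ K, a i • φ i = 0) (hb : ∑ j ∈ L, b j • ψ j = 0) :
    ∑ i ∈ K ∩ L, conj (a i) * b i * (inner 𝕜 (φ i) (φ i) + inner 𝕜 (ψ i) (ψ i)) = 0 := by
  -- The Gram matrices of `φ` and `ψ` add up to a diagonal matrix, so pairing the two dependences
  -- keeps only the indices in `K ∩ L`.
  obtain ⟨d, hd⟩ : ∃ d : ι → 𝕜, ∀ i, inner 𝕜 (φ i) (φ i) + inner 𝕜 (ψ i) (ψ i) = d i :=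
    ⟨_, fun _ ↦ rfl⟩
  have gram_add (i j : ι) : inner 𝕜 (φ i) (φ j) + inner 𝕜 (ψ i) (ψ j) =
      if i = j then d i else 0 := by
    split_ifs with hij
    · rw [← hij, hd]
    · rw [hdual i j hij, add_neg_cancel]
  calc ∑ i ∈ K ∩ L, conj (a i) * b i * (inner 𝕜 (φ i) (φ i) + inner 𝕜 (ψ i) (ψ i))
      = ∑ i ∈ K, ∑ j ∈ L,
          conj (a i) * b j * (inner 𝕜 (φ i) (φ j) + inner 𝕜 (ψ i) (ψ j)) := by
        simp only [gram_add, if_true, mul_ite, mul_zero, Finset.sum_ite_eq, Finset.sum_ite_mem]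
    _ = inner 𝕜 (∑ i ∈ K, a i • φ i) (∑ j ∈ L, b j • φ j) +
          inner 𝕜 (∑ i ∈ K, a i • ψ i) (∑ j ∈ L, b j • ψ j) := by
        simp_rw [sum_inner, inner_sum, inner_smul_left, inner_smul_right, mul_add,
          Finset.sum_add_distrib, mul_assoc]
    _ = 0 := by rw [ha, hb, inner_zero_left, inner_zero_right, add_zero]

section Dual

variable [DecidableEq ι] {φ : ι → E} {ψ : ι → F}
  (hdual : ∀ i j, i ≠ j → inner 𝕜 (ψ i) (ψ j) = -inner 𝕜 (φ i) (φ j))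
  {K L : Finset ι} {C C' : ℝ} {z w : ι → 𝕜}
include hdual

theorem sum_inter_conj_mul_phase_eq_zero (hC : 0 < C) (hC' : 0 < C') (hK : 2 ≤ K.card)
    (hL : 2 ≤ L.card) (hz : IsSimplexPhase (fun k : K ↦ φ k) C (fun k : K ↦ z k))
    (hw : IsSimplexPhase (fun l : L ↦ ψ l) C' (fun l : L ↦ w l)) :
    ∑ i ∈ K ∩ L, conj (z i) * w i = 0 := by
  obtain ⟨-, inner_self_φ, -⟩ := isSimplexPhase_restrict_iff.mp hz
  obtain ⟨-, inner_self_ψ, -⟩ := isSimplexPhase_restrict_iff.mp hw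
  have dependence_φ : ∑ i ∈ K, z i • φ i = 0 :=
    (Finset.sum_coe_sort K fun i ↦ z i • φ i).symm.trans hz.sum_smul_eq_zero
  have dependence_ψ : ∑ i ∈ L, w i • ψ i = 0 :=
    (Finset.sum_coe_sort L fun i ↦ w i • ψ i).symm.trans hw.sum_smul_eq_zero
  set T : ℝ := (K.card - 1) * C + (L.card - 1) * C' with hT
  have T_pos : 0 < T := by
    have : (2 : ℝ) ≤ K.card := by exact_mod_cast hK
    have : (2 : ℝ) ≤ L.card := by exact_mod_cast hL
    exact add_pos (mul_pos (by linarith) hC) (mul_pos (by linarith) hC')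
  have inner_self_add (i : ι) (hi : i ∈ K ∩ L) :
      inner 𝕜 (φ i) (φ i) + inner 𝕜 (ψ i) (ψ i) = (T : 𝕜) := by
    obtain ⟨hiK, hiL⟩ := Finset.mem_inter.mp hi
    rw [inner_self_φ i hiK, inner_self_ψ i hiL, hT, RCLike.ofReal_add]
  refine (mul_eq_zero.mp ?_).resolve_right (RCLike.ofReal_ne_zero.mpr T_pos.ne')
  rw [Finset.sum_mul, ← sum_inter_eq_zero_of_sum_smul_eq_zero hdual dependence_φ dependence_ψ]
  exact Finset.sum_congr rfl fun i hi ↦ by rw [inner_self_add i hi]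

theorem conj_mul_phase_eq_neg (hC : 0 < C) (hC' : 0 < C')
    (hz : IsSimplexPhase (fun k : K ↦ φ k) C (fun k : K ↦ z k))
    (hw : IsSimplexPhase (fun l : L ↦ ψ l) C' (fun l : L ↦ w l)) {i j : ι}
    (hi : i ∈ K ∩ L) (hj : j ∈ K ∩ L) (hij : i ≠ j) :
    conj (z j) * w j = -(conj (z i) * w i) := by
  obtain ⟨hiK, hiL⟩ := Finset.mem_inter.mp hi
  obtain ⟨hjK, hjL⟩ := Finset.mem_inter.mp hj
  obtain rfl : C = C' := by
    rw [← hz.norm_inner_of_ne hC.le (i := ⟨i, hiK⟩) (j := ⟨j, hjK⟩) (by simpa using hij),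
      ← hw.norm_inner_of_ne hC'.le (i := ⟨i, hiL⟩) (j := ⟨j, hjL⟩) (by simpa using hij),
      hdual i j hij, norm_neg]
  have phases_eq : z i * conj (z j) = -(w i * conj (w j)) := by
    have inner_φ := (isSimplexPhase_restrict_iff.mp hz).2.2 i hiK j hjK hij
    have inner_ψ := (isSimplexPhase_restrict_iff.mp hw).2.2 i hiL j hjL hij
    rw [hdual i j hij, inner_φ, neg_neg, ← mul_neg] at inner_ψ
    exact mul_left_cancel₀ (RCLike.ofReal_ne_zero.mpr hC.ne') inner_ψ
  have conj_mul_z : conj (z i) * z i = 1 := hz.conj_mul ⟨i, hiK⟩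
  have conj_mul_w : conj (w j) * w j = 1 := hw.conj_mul ⟨j, hjL⟩
  linear_combination (conj (z i) * w j) * phases_eq - (conj (z j) * w j) * conj_mul_z -
    (conj (z i) * w i) * conj_mul_w

theorem card_inter_eq_zero_or_two_of_mem_binder [Fintype ι] (hK : K ∈ binder 𝕜 φ)
    (hL : L ∈ binder 𝕜 ψ) : (K ∩ L).card = 0 ∨ (K ∩ L).card = 2 := by
  obtain ⟨two_le_cardK, C, hC, z, hz⟩ := isRegularSimplex_iff_exists_isSimplexPhase.mp hK
  obtain ⟨two_le_cardL, C', hC', w, hw⟩ := isRegularSimplex_iff_exists_isSimplexPhase.mp hL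
  refine card_eq_zero_or_two_of_sum_eq_zero (u := fun i ↦ conj (z i) * w i) (fun i hi ↦ ?_)
    (fun i hi j hj ↦ conj_mul_phase_eq_neg hdual hC hC' hz hw hi hj)
    (sum_inter_conj_mul_phase_eq_zero hdual hC hC' two_le_cardK two_le_cardL hz hw)
  obtain ⟨hiK, hiL⟩ := Finset.mem_inter.mp hi
  have norm_z : ‖z i‖ = 1 := hz.norm_eq_one ⟨i, hiK⟩
  have norm_w : ‖w i‖ = 1 := hw.norm_eq_one ⟨i, hiL⟩
  rw [← norm_ne_zero_iff, norm_mul, RCLike.norm_conj, norm_z, norm_w, one_mul]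
  exact one_ne_zero

end Dual

end Binder

theorem binder_of_DTETF_forms_BIBD_general
    {𝕜 E F ι : Type*} [RCLike 𝕜] [NormedAddCommGroup E] [InnerProductSpace 𝕜 E]
    [NormedAddCommGroup F] [InnerProductSpace 𝕜 F] [Fintype ι] [DecidableEq ι]
    (φ : ι → E) (ψ : ι → F) (S : ℝ) (hnorm : ∀ i, inner 𝕜 (φ i) (φ i) = (S : 𝕜))
    (hDT : ∀ i j k l : ι, i ≠ j → k ≠ l → ∃ σ, IsSymmetry 𝕜 φ σ ∧ σ i = k ∧ σ j = l)
    (hdual : ∀ i j, i ≠ j → inner 𝕜 (ψ i) (ψ j) = -inner 𝕜 (φ i) (φ j))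
    (hne : (binder 𝕜 φ).Nonempty) :
    (∃ k : ℕ, ∀ K ∈ binder 𝕜 φ, K.card = k) ∧
    (∃ Λ : ℕ, 1 ≤ Λ ∧ ∀ i j : ι, i ≠ j → {K ∈ binder 𝕜 φ | i ∈ K ∧ j ∈ K}.ncard = Λ) ∧
    (∀ L ∈ binder 𝕜 ψ,
      L.Nonempty ∧ ∀ K ∈ binder 𝕜 φ, (K ∩ L).card = 0 ∨ (K ∩ L).card = 2) := by
  obtain ⟨K₀, hK₀⟩ := hne
  have two_le_card := hK₀.two_le_card
  obtain ⟨a, -, b, -, hab⟩ := Finset.one_lt_card.mp two_le_card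
  have equiangular (i j : ι) (hij : i ≠ j) :
      ‖inner 𝕜 (φ i) (φ j)‖ = ‖inner 𝕜 (φ a) (φ b)‖ := by
    obtain ⟨σ, hσ, rfl, rfl⟩ := hDT a b i j hab hij
    exact hσ.norm_inner_eq hab
  refine ⟨⟨K₀.card, fun K hK ↦ hK.card_eq_card hnorm equiangular hK₀⟩,
    exists_forall_ncard_pair_eq (fun i j k l hij hkl ↦ ?_) hK₀ two_le_card,
    fun L hL ↦ ⟨Finset.card_pos.mp (two_pos.trans_le hL.two_le_card),
      fun K hK ↦ card_inter_eq_zero_or_two_of_mem_binder hdual hK hL⟩⟩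
  obtain ⟨σ, hσ, hik, hjl⟩ := hDT i j k l hij hkl
  exact ⟨σ, fun K hK ↦ hσ.map_mem_binder hnorm hK, hik, hjl⟩

/-- The binder of a doubly transitive ETF, if nonempty, forms a
BIBD, and every member of the binder of its dual is an oval of this BIBD. -/
theorem binder_of_DTETF_forms_BIBD
    {E F ι : Type*} [NormedAddCommGroup E] [InnerProductSpace ℂ E]
    [NormedAddCommGroup F] [InnerProductSpace ℂ F]
    [Fintype ι] [DecidableEq ι]
    (φ : ι → E) (ψ : ι → F) (D : ℕ) (S : ℝ)
    (hETF : IsETF ℂ φ)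
    (hS : 0 < S) (hnorm : ∀ n, (inner ℂ (φ n) (φ n) : ℂ) = (S : ℂ))
    (hD : Module.finrank ℂ (Submodule.span ℂ (Set.range φ)) = D)
    (hDN : D < Fintype.card ι)
    (hDT : ∀ n₁ n₂ n₃ n₄ : ι, n₁ ≠ n₂ → n₃ ≠ n₄ →
      ∃ σ : Equiv.Perm ι,
        (∃ z : ι → ℂ, (∀ n, ‖z n‖ = 1) ∧
          ∀ m₁ m₂ : ι, m₁ ≠ m₂ →
            (inner ℂ (φ (σ m₁)) (φ (σ m₂)) : ℂ) =
              (starRingEnd ℂ) (z m₁) * z m₂ * (inner ℂ (φ m₁) (φ m₂) : ℂ)) ∧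
        σ n₁ = n₃ ∧ σ n₂ = n₄)
    (hdual_diag : ∀ n, (inner ℂ (ψ n) (ψ n) : ℂ) =
      (((((Fintype.card ι : ℝ) - D) * S / D : ℝ)) : ℂ))
    (hdual_off : ∀ n₁ n₂ : ι, n₁ ≠ n₂ →
      (inner ℂ (ψ n₁) (ψ n₂) : ℂ) = -(inner ℂ (φ n₁) (φ n₂) : ℂ))
    (hne : (binder ℂ φ).Nonempty) :
    (∃ k : ℕ, ∀ K ∈ binder ℂ φ, K.card = k) ∧
    (∃ Λ : ℕ, 1 ≤ Λ ∧ ∀ n₁ n₂ : ι, n₁ ≠ n₂ →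
      {K ∈ binder ℂ φ | n₁ ∈ K ∧ n₂ ∈ K}.ncard = Λ) ∧
    (∀ L ∈ binder ℂ ψ,
      L.Nonempty ∧ ∀ K ∈ binder ℂ φ, (K ∩ L).card = 0 ∨ (K ∩ L).card = 2) :=
  binder_of_DTETF_forms_BIBD_general φ ψ S hnorm hDT hdual_off hne
end
end

section
/- Let P be a prime, J a positive integer, and B a symplectic form on a 2J-dimensional vector space V over F_P. Then there exists a set 𝒜 of exactly P^J + 1 Lagrangian subspaces of V such that every nonzero vector of V lies in exactly one member of 𝒜 (a symplectic spread). Consequently the cosets of the members of 𝒜 form an affine plane of order P^J on the point set V: P^J(P^J+1) blocks, each of cardinality P^J, such that every pair of distinct points of V lies in exactly one block. -/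
open scoped BigOperators

noncomputable section

/-- A bilinear form is symplectic: alternating and nondegenerate. -/
def IsSymplectic {F V : Type*} [CommRing F] [AddCommGroup V] [Module F V]
    (B : V →ₗ[F] V →ₗ[F] F) : Prop :=
  (∀ v, B v v = 0) ∧ ∀ v : V, v ≠ 0 → ∃ w, B v w ≠ 0

/-- The orthogonal complement of a subset with respect to a bilinear form. -/
def sympPerp {F V : Type*} [CommRing F] [AddCommGroup V] [Module F V]
    (B : V →ₗ[F] V →ₗ[F] F) (S : Set V) : Set V :=
  {w | ∀ v ∈ S, B v w = 0}

/-- A subspace is Lagrangian if it equals its own orthogonal complement. -/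
def IsLagrangian {F V : Type*} [CommRing F] [AddCommGroup V] [Module F V]
    (B : V →ₗ[F] V →ₗ[F] F) (L : Submodule F V) : Prop :=
  (L : Set V) = sympPerp B (L : Set V)

/-! **Idea.** View the plane `K × K` over `K = F_{q^J}` as an `F_q`-space of dimension `2J`, and
equip it with `t ∘ D`, where `D` is the determinant form over `K` and `t` a nonzero `F_q`-linear
functional on `K`. The `K`-lines through the origin partition the nonzero vectors, and each of
them is Lagrangian because it is its own `D`-orthogonal. All symplectic spaces of a given
dimension are isometric, so this spread can be carried over to `V`. As any two members of a spread
meet only in `0`, two distinct points `x` and `y` lie in a common coset of the member through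
`x - y`, and of no other. -/

section AffinePlane

variable {R V : Type*} [Ring R] [AddCommGroup V] [Module R V] {𝒜 : Set (Submodule R V)}

/-- A spread in the weak sense of a partition of the nonzero vectors into submodules; the usual
requirement that the members have the same size is imposed separately where it is needed. -/
def IsSpread (𝒜 : Set (Submodule R V)) : Prop :=
  ∀ v : V, v ≠ 0 → ∃! L, L ∈ 𝒜 ∧ v ∈ L

/-- The blocks of the translation plane of `𝒜`: the cosets of the members of `𝒜`. -/
def cosetBlocks (𝒜 : Set (Submodule R V)) : Set (Set V) :=
  {A | ∃ v : V, ∃ L ∈ 𝒜, A = (fun x => v + x) '' (L : Set V)}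

theorem image_add_left_eq_preimage_mkQ (v : V) (L : Submodule R V) :
    (fun x => v + x) '' (L : Set V) = L.mkQ ⁻¹' {L.mkQ v} := by
  ext x
  simp [Set.image_add_left, Submodule.Quotient.eq, neg_add_eq_sub]

theorem cosetBlocks_eq_range_preimage_mkQ (𝒜 : Set (Submodule R V)) :
    cosetBlocks 𝒜 = Set.range fun p : Σ L : 𝒜, V ⧸ L.1 => p.1.1.mkQ ⁻¹' {p.2} := by
  ext A
  constructor
  · rintro ⟨v, L, hL, rfl⟩
    exact ⟨⟨⟨L, hL⟩, L.mkQ v⟩, (image_add_left_eq_preimage_mkQ v L).symm⟩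
  · rintro ⟨⟨⟨L, hL⟩, c⟩, rfl⟩
    obtain ⟨v, rfl⟩ := L.mkQ_surjective c
    exact ⟨v, L, hL, (image_add_left_eq_preimage_mkQ v L).symm⟩

theorem preimage_mkQ_injective (𝒜 : Set (Submodule R V)) :
    Function.Injective fun p : Σ L : 𝒜, V ⧸ L.1 => p.1.1.mkQ ⁻¹' {p.2} := by
  rintro ⟨⟨L, hL⟩, c⟩ ⟨⟨M, hM⟩, d⟩ h
  obtain ⟨v, rfl⟩ := L.mkQ_surjective c
  have mem_iff (x : V) : L.mkQ x = L.mkQ v ↔ M.mkQ x = d := Set.ext_iff.1 h x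
  obtain rfl : M.mkQ v = d := (mem_iff v).1 rfl
  obtain rfl : L = M := by
    ext x
    simpa using mem_iff (v + x)
  rfl

theorem ncard_cosetBlocks [Finite V] {m : ℕ} (hm : ∀ L ∈ 𝒜, Nat.card (V ⧸ L) = m) :
    (cosetBlocks 𝒜).ncard = 𝒜.ncard * m := by
  have := Fintype.ofFinite 𝒜
  have (L : 𝒜) : Finite (V ⧸ L.1) := Finite.of_surjective _ L.1.mkQ_surjective
  rw [cosetBlocks_eq_range_preimage_mkQ, ← Nat.card_coe_set_eq,
    Nat.card_range_of_injective (preimage_mkQ_injective 𝒜), Nat.card_sigma,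
    Finset.sum_congr rfl fun L _ => hm L.1 L.2, Finset.sum_const, Finset.card_univ,
    ← Nat.card_eq_fintype_card, Nat.card_coe_set_eq, smul_eq_mul]

theorem ncard_of_mem_cosetBlocks {q : ℕ} (hq : ∀ L ∈ 𝒜, Nat.card L = q) {A : Set V}
    (hA : A ∈ cosetBlocks 𝒜) : A.ncard = q := by
  obtain ⟨v, L, hL, rfl⟩ := hA
  rw [Set.ncard_image_of_injective _ (add_right_injective v), ← hq L hL]
  rfl

theorem IsSpread.existsUnique_mem_cosetBlocks (h𝒜 : IsSpread 𝒜) {x y : V} (hxy : x ≠ y) :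
    ∃! A, A ∈ cosetBlocks 𝒜 ∧ x ∈ A ∧ y ∈ A := by
  obtain ⟨L, ⟨hL, hxyL⟩, huniq⟩ := h𝒜 (x - y) (sub_ne_zero.2 hxy)
  refine ⟨(fun z => x + z) '' L, ⟨⟨x, L, hL, rfl⟩, ?_⟩, ?_⟩
  · rw [image_add_left_eq_preimage_mkQ]
    exact ⟨rfl, ((Submodule.Quotient.eq L).2 hxyL).symm⟩
  · rintro _ ⟨⟨v, M, hM, rfl⟩, hx, hy⟩
    rw [image_add_left_eq_preimage_mkQ] at hx hy ⊢
    obtain rfl : M = L := huniq M ⟨hM, (Submodule.Quotient.eq M).1 (hx.trans hy.symm)⟩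
    rw [image_add_left_eq_preimage_mkQ, show M.mkQ x = M.mkQ v from hx]

theorem IsSpread.card_eq [Finite V] (h𝒜 : IsSpread 𝒜) {q : ℕ} (hq : ∀ L ∈ 𝒜, Nat.card L = q) :
    Nat.card V = 𝒜.ncard * (q - 1) + 1 := by
  have := Fintype.ofFinite 𝒜
  let f : (Σ L : 𝒜, {v : L.1 // v ≠ 0}) → {v : V // v ≠ 0} :=
    fun p => ⟨p.2.1, fun h => p.2.2 (Subtype.ext h)⟩
  have hf : f.Bijective := by
    constructor
    · rintro ⟨⟨L, hL⟩, ⟨v, hv⟩, hv0⟩ ⟨⟨M, hM⟩, ⟨w, hw⟩, hw0⟩ h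
      obtain rfl : v = w := congrArg Subtype.val h
      obtain rfl : L = M := (h𝒜 v fun h => hv0 (Subtype.ext h)).unique ⟨hL, hv⟩ ⟨hM, hw⟩
      rfl
    · rintro ⟨v, hv⟩
      obtain ⟨L, ⟨hL, hvL⟩, -⟩ := h𝒜 v hv
      exact ⟨⟨⟨L, hL⟩, ⟨v, hvL⟩, fun h => hv (congrArg Subtype.val h)⟩, rfl⟩
  have card_ne_zero (G : Type _) [AddCommGroup G] [Finite G] :
      Nat.card {v : G // v ≠ 0} = Nat.card G - 1 :=
    (Nat.card_coe_set_eq ({0}ᶜ : Set G)).trans (by rw [Set.ncard_compl, Set.ncard_singleton])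
  have hcard := Nat.card_congr (Equiv.ofBijective f hf)
  rw [Nat.card_sigma, card_ne_zero,
    Finset.sum_congr rfl fun L _ => (card_ne_zero L.1).trans (congrArg (· - 1) (hq L.1 L.2)),
    Finset.sum_const, Finset.card_univ, ← Nat.card_eq_fintype_card, Nat.card_coe_set_eq,
    smul_eq_mul] at hcard
  rw [hcard, Nat.sub_add_cancel Nat.card_pos]

theorem IsSpread.ncard_eq (h𝒜 : IsSpread 𝒜) {q : ℕ} (hq : ∀ L ∈ 𝒜, Nat.card L = q) (h1q : 1 < q)
    (hV : Nat.card V = q ^ 2) : 𝒜.ncard = q + 1 := by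
  have : Finite V := Nat.finite_of_card_ne_zero (by rw [hV]; positivity)
  obtain ⟨r, rfl⟩ := Nat.exists_eq_add_of_lt h1q
  have hcount := h𝒜.card_eq hq
  rw [hV, Nat.add_sub_cancel] at hcount
  exact Nat.eq_of_mul_eq_mul_right (by lia : 0 < 1 + r) (by lia)

theorem IsSpread.ncard_cosetBlocks_eq (h𝒜 : IsSpread 𝒜) {q : ℕ} (hq : ∀ L ∈ 𝒜, Nat.card L = q)
    (h1q : 1 < q) (hV : Nat.card V = q ^ 2) : (cosetBlocks 𝒜).ncard = q * (q + 1) := by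
  have : Finite V := Nat.finite_of_card_ne_zero (by rw [hV]; positivity)
  have hquot (L) (hL : L ∈ 𝒜) : Nat.card (V ⧸ L) = q := by
    have hmul := L.card_eq_card_quotient_mul_card
    rw [hV, hq L hL, sq] at hmul
    exact (Nat.eq_of_mul_eq_mul_left (zero_lt_one.trans h1q) hmul).symm
  rw [ncard_cosetBlocks hquot, h𝒜.ncard_eq hq h1q hV, mul_comm]

theorem IsSpread.map {W : Type*} [AddCommGroup W] [Module R W] (h𝒜 : IsSpread 𝒜) (φ : V ≃ₗ[R] W) :
    IsSpread (Submodule.map φ.toLinearMap '' 𝒜) := by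
  intro w hw
  obtain ⟨v, rfl⟩ := φ.surjective w
  obtain ⟨L, ⟨hL, hvL⟩, huniq⟩ := h𝒜 v fun hv => hw (by simp [hv])
  refine ⟨L.map φ.toLinearMap, ⟨⟨L, hL, rfl⟩, v, hvL, rfl⟩, ?_⟩
  rintro _ ⟨⟨M, hM, rfl⟩, v', hv', hφ⟩
  obtain rfl : v' = v := φ.injective hφ
  rw [huniq M ⟨hM, hv'⟩]

end AffinePlane

section SymplecticBasis

section CommRing

variable {R V : Type*} [CommRing R] [AddCommGroup V] [Module R V] {B : V →ₗ[R] V →ₗ[R] R}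

theorem IsSymplectic.neg_apply_swap (hB : IsSymplectic B) (x y : V) : -B x y = B y x :=
  LinearMap.IsAlt.neg hB.1 x y

theorem IsSymplectic.ker_eq_bot (hB : IsSymplectic B) : B.ker = ⊥ :=
  LinearMap.ker_eq_bot'.2 fun v hv => by
    by_contra hv0
    obtain ⟨w, hw⟩ := hB.2 v hv0
    exact hw (LinearMap.congr_fun hv w)

/-- Two families `e`, `f` spanning a sum of orthogonal hyperbolic planes with hyperbolic pairs
`e i, f i`; when they form a basis, this is a symplectic (Darboux) basis. -/
structure IsSymplecticFamily {ι : Type*} [DecidableEq ι] (B : V →ₗ[R] V →ₗ[R] R)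
    (e f : ι → V) : Prop where
  apply_left_left : ∀ i j, B (e i) (e j) = 0
  apply_right_right : ∀ i j, B (f i) (f j) = 0
  apply_left_right : ∀ i j, B (e i) (f j) = if i = j then 1 else 0

namespace IsSymplecticFamily

variable {ι : Type*} [DecidableEq ι] {e f : ι → V}

theorem apply_right_left (h : IsSymplecticFamily B e f) (hB : IsSymplectic B) (i j : ι) :
    B (f i) (e j) = if i = j then -1 else 0 := by
  rw [← hB.neg_apply_swap, h.apply_left_right]
  split_ifs <;> simp_all

theorem linearIndependent [Finite ι] (h : IsSymplecticFamily B e f) (hB : IsSymplectic B) :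
    LinearIndependent R (Sum.elim e f) := by
  have := Fintype.ofFinite ι
  rw [Fintype.linearIndependent_iff]
  intro c hc
  rw [Fintype.sum_sum_type] at hc
  rintro (i | i)
  · simpa [h.apply_right_right, h.apply_right_left hB] using congrArg (B (f i)) hc
  · simpa [h.apply_left_left, h.apply_left_right] using congrArg (B (e i)) hc

theorem exists_orthogonal_projection [Finite ι] (h : IsSymplecticFamily B e f) (hB : IsSymplectic B)
    (w : V) : ∃ w', (∀ i, B (e i) w' = 0) ∧ (∀ i, B (f i) w' = 0) ∧
      ∀ v, (∀ i, B v (e i) = 0) → (∀ i, B v (f i) = 0) → B v w' = B v w := by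
  have := Fintype.ofFinite ι
  refine ⟨w + ∑ i, B (f i) w • e i - ∑ i, B (e i) w • f i, fun i => ?_, fun i => ?_,
    fun v hve hvf => ?_⟩
  · simp [h.apply_left_left, h.apply_left_right]
  · simp [h.apply_right_right, h.apply_right_left hB]
  · simp [hve, hvf]

theorem cons {n : ℕ} {e f : Fin n → V} (h : IsSymplecticFamily B e f) (hB : IsSymplectic B)
    {v w : V} (hvw : B v w = 1) (hev : ∀ i, B (e i) v = 0) (hfv : ∀ i, B (f i) v = 0)
    (hew : ∀ i, B (e i) w = 0) (hfw : ∀ i, B (f i) w = 0) :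
    IsSymplecticFamily B (Fin.cons v e : Fin (n + 1) → V) (Fin.cons w f : Fin (n + 1) → V) where
  apply_left_left i j := by
    cases i using Fin.cases <;> cases j using Fin.cases <;>
      simp [hB.1, hev, h.apply_left_left, ← hB.neg_apply_swap _ v]
  apply_right_right i j := by
    cases i using Fin.cases <;> cases j using Fin.cases <;>
      simp [hB.1, hfw, h.apply_right_right, ← hB.neg_apply_swap _ w]
  apply_left_right i j := by
    cases i using Fin.cases <;> cases j using Fin.cases <;>
      simp [hvw, hew, hfv, h.apply_left_right, ← hB.neg_apply_swap _ v, Fin.succ_ne_zero,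
        (Fin.succ_ne_zero _).symm]

end IsSymplecticFamily

end CommRing

variable {F V : Type*} [Field F] [AddCommGroup V] [Module F V] {B : V →ₗ[F] V →ₗ[F] F}

theorem exists_ne_zero_forall_apply_eq_zero [FiniteDimensional F V] {κ : Type*} [Fintype κ]
    (ℓ : κ → Module.Dual F V) (hκ : Fintype.card κ < Module.finrank F V) :
    ∃ v ≠ 0, ∀ k, ℓ k v = 0 := by
  have hker : LinearMap.ker (LinearMap.pi ℓ) ≠ ⊥ :=
    LinearMap.ker_ne_bot_of_finrank_lt (by simpa using hκ)
  obtain ⟨v, hv, hv0⟩ := Submodule.exists_mem_ne_zero_of_ne_bot hker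
  exact ⟨v, hv0, congrFun hv⟩

theorem IsSymplecticFamily.exists_cons [FiniteDimensional F V] {n : ℕ} {e f : Fin n → V}
    (h : IsSymplecticFamily B e f) (hB : IsSymplectic B) (hn : 2 * n < Module.finrank F V) :
    ∃ v w, IsSymplecticFamily B (Fin.cons v e : Fin (n + 1) → V)
      (Fin.cons w f : Fin (n + 1) → V) := by
  obtain ⟨v, hv, horth⟩ := exists_ne_zero_forall_apply_eq_zero (B ∘ Sum.elim e f)
    (by simpa [← two_mul] using hn)
  have hev (i) : B (e i) v = 0 := horth (Sum.inl i)
  have hfv (i) : B (f i) v = 0 := horth (Sum.inr i)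
  obtain ⟨u, hu⟩ := hB.2 v hv
  obtain ⟨w, hew, hfw, hw⟩ := h.exists_orthogonal_projection hB ((B v u)⁻¹ • u)
  have hvw : B v w = 1 := by
    rw [hw v (fun i => by rw [← hB.neg_apply_swap, hev, neg_zero])
      (fun i => by rw [← hB.neg_apply_swap, hfv, neg_zero]), map_smul, smul_eq_mul,
      inv_mul_cancel₀ hu]
  exact ⟨v, w, h.cons hB hvw hev hfv hew hfw⟩

theorem IsSymplectic.exists_isSymplecticFamily [FiniteDimensional F V] (hB : IsSymplectic B)
    (n : ℕ) (hn : 2 * n ≤ Module.finrank F V + 1) :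
    ∃ e f : Fin n → V, IsSymplecticFamily B e f := by
  induction n with
  | zero => exact ⟨Fin.elim0, Fin.elim0, by constructor <;> exact fun i => i.elim0⟩
  | succ n ih =>
    obtain ⟨e, f, h⟩ := ih (by lia)
    obtain ⟨v, w, hvw⟩ := h.exists_cons hB (by lia)
    exact ⟨_, _, hvw⟩

theorem IsSymplectic.exists_symplectic_basis [FiniteDimensional F V] (hB : IsSymplectic B) :
    ∃ (n : ℕ) (b : Module.Basis (Fin n ⊕ Fin n) F V),
      IsSymplecticFamily B (b ∘ Sum.inl) (b ∘ Sum.inr) := by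
  let n := (Module.finrank F V + 1) / 2
  obtain ⟨e, f, h⟩ := hB.exists_isSymplecticFamily n (by lia)
  have hindep := h.linearIndependent hB
  -- Rounding up in `n` makes independence force `finrank F V` to be even.
  have hcard : Fintype.card (Fin n ⊕ Fin n) = Module.finrank F V := by
    have := hindep.fintype_card_le_finrank
    simp only [Fintype.card_sum, Fintype.card_fin] at this ⊢
    lia
  let b := Module.Basis.mk hindep (hindep.span_eq_top_of_card_eq_finrank' hcard).ge
  exact ⟨n, b, by simpa [b] using h⟩

theorem IsSymplectic.exists_isometry [FiniteDimensional F V] {V' : Type*} [AddCommGroup V']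
    [Module F V'] [FiniteDimensional F V'] {B' : V' →ₗ[F] V' →ₗ[F] F} (hB : IsSymplectic B)
    (hB' : IsSymplectic B') (hdim : Module.finrank F V = Module.finrank F V') :
    ∃ φ : V ≃ₗ[F] V', ∀ x y, B' (φ x) (φ y) = B x y := by
  obtain ⟨n, b, hb⟩ := hB.exists_symplectic_basis
  obtain ⟨n', b', hb'⟩ := hB'.exists_symplectic_basis
  obtain rfl : n = n' := by
    rw [Module.finrank_eq_card_basis b, Module.finrank_eq_card_basis b'] at hdim
    simp only [Fintype.card_sum, Fintype.card_fin] at hdim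
    lia
  let φ : V ≃ₗ[F] V' := b.equiv b' (Equiv.refl _)
  have hgram : B'.compl₁₂ φ.toLinearMap φ.toLinearMap = B := by
    refine LinearMap.ext_basis b b ?_
    rintro (i | i) (j | j) <;> simp only [LinearMap.compl₁₂_apply, φ,
      LinearEquiv.coe_coe, Module.Basis.equiv_apply, Equiv.refl_apply]
    · exact (hb'.apply_left_left i j).trans (hb.apply_left_left i j).symm
    · exact (hb'.apply_left_right i j).trans (hb.apply_left_right i j).symm
    · exact (hb'.apply_right_left hB' i j).trans (hb.apply_right_left hB i j).symm
    · exact (hb'.apply_right_right i j).trans (hb.apply_right_right i j).symm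
  exact ⟨φ, fun x y => LinearMap.congr_fun₂ hgram x y⟩

end SymplecticBasis

section Lagrangian

theorem IsLagrangian.map {F V V' : Type*} [CommRing F] [AddCommGroup V] [Module F V]
    [AddCommGroup V'] [Module F V'] {B : V →ₗ[F] V →ₗ[F] F} {B' : V' →ₗ[F] V' →ₗ[F] F}
    {L : Submodule F V} (hL : IsLagrangian B L) (φ : V ≃ₗ[F] V')
    (hφ : ∀ x y, B' (φ x) (φ y) = B x y) : IsLagrangian B' (L.map φ.toLinearMap) := by
  ext w
  obtain ⟨v, rfl⟩ := φ.surjective w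
  have hv : v ∈ L ↔ ∀ u ∈ L, B u v = 0 := Set.ext_iff.1 hL v
  simp [sympPerp, hv, hφ]

variable {F V : Type*} [Field F] [AddCommGroup V] [Module F V] {B : V →ₗ[F] V →ₗ[F] F}

theorem IsLagrangian.two_mul_finrank [FiniteDimensional F V] {L : Submodule F V}
    (hL : IsLagrangian B L) (hB : IsSymplectic B) :
    2 * Module.finrank F L = Module.finrank F V := by
  have hrefl : B.IsRefl := LinearMap.IsAlt.isRefl hB.1
  have horth : LinearMap.BilinForm.orthogonal B L = L := SetLike.coe_injective hL.symm
  have h := LinearMap.BilinForm.finrank_add_finrank_orthogonal hrefl L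
  rw [horth, LinearMap.BilinForm.orthogonal_top_eq_ker hrefl, hB.ker_eq_bot, inf_bot_eq,
    finrank_bot, add_zero, ← two_mul] at h
  exact h

theorem IsSymplectic.isLagrangian_span_singleton (hB : IsSymplectic B)
    (hdim : Module.finrank F V = 2) {v : V} (hv : v ≠ 0) : IsLagrangian B (F ∙ v) := by
  have : FiniteDimensional F V := Module.finite_of_finrank_pos (by lia)
  have hBv : B v ≠ 0 := fun h => hv (LinearMap.ker_eq_bot'.1 hB.ker_eq_bot v h)
  have hle : F ∙ v ≤ LinearMap.ker (B v) := (Submodule.span_singleton_le_iff_mem _ _).2 (hB.1 v)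
  have hspan : F ∙ v = LinearMap.ker (B v) := by
    refine Submodule.eq_of_le_of_finrank_eq hle ?_
    have hker := Module.Dual.finrank_ker_add_one_of_ne_zero hBv
    rw [finrank_span_singleton hv]
    lia
  ext w
  have hw : w ∈ F ∙ v ↔ B v w = 0 := by rw [hspan, LinearMap.mem_ker]
  refine hw.trans ⟨fun h u hu => ?_, fun h => h v (Submodule.mem_span_singleton_self v)⟩
  obtain ⟨c, rfl⟩ := Submodule.mem_span_singleton.1 hu
  rw [map_smul, LinearMap.smul_apply, h, smul_zero]

end Lagrangian

section FieldReduction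

variable {F K W : Type*} [CommRing F] [Field K] [Algebra F K] [AddCommGroup W] [Module K W]
  [Module F W] [IsScalarTower F K W] {t : K →ₗ[F] F} {D : W →ₗ[K] W →ₗ[K] K}

/-- The `F`-bilinear form `t ∘ D` obtained from a `K`-bilinear form `D` by field reduction along an
`F`-linear functional `t` on `K`, for instance the trace. -/
def fieldReduction (t : K →ₗ[F] F) (D : W →ₗ[K] W →ₗ[K] K) : W →ₗ[F] W →ₗ[F] F :=
  (D.restrictScalars₁₂ F F).compr₂ t

theorem fieldReduction_apply (t : K →ₗ[F] F) (D : W →ₗ[K] W →ₗ[K] K) (x y : W) :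
    fieldReduction t D x y = t (D x y) :=
  rfl

theorem eq_zero_of_forall_map_mul_eq_zero (ht : t ≠ 0) {a : K} (ha : ∀ c, t (c * a) = 0) :
    a = 0 := by
  by_contra h0
  exact ht (LinearMap.ext fun b => by simpa [h0] using ha (b * a⁻¹))

theorem IsSymplectic.fieldReduction (hD : IsSymplectic D) (ht : t ≠ 0) :
    IsSymplectic (fieldReduction t D) := by
  refine ⟨fun v => by rw [fieldReduction_apply, hD.1, map_zero], fun v hv => ?_⟩
  obtain ⟨w, hw⟩ := hD.2 v hv
  contrapose! hw
  refine eq_zero_of_forall_map_mul_eq_zero ht fun c => ?_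
  simpa [fieldReduction_apply] using hw (c • w)

theorem IsLagrangian.fieldReduction {L : Submodule K W} (hL : IsLagrangian D L) (ht : t ≠ 0) :
    IsLagrangian (fieldReduction t D) (L.restrictScalars F) := by
  ext w
  have hw : w ∈ L ↔ ∀ v ∈ L, D v w = 0 := Set.ext_iff.1 hL w
  refine ⟨fun h v hv => by rw [fieldReduction_apply, hw.1 h v hv, map_zero], fun h => ?_⟩
  refine hw.2 fun v hv => eq_zero_of_forall_map_mul_eq_zero ht fun c => ?_
  simpa [fieldReduction_apply] using h (c • v) (L.smul_mem c hv)

end FieldReduction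

section DesarguesianSpread

/-- The Desarguesian spread of a `K`-space: its `K`-lines, regarded as `F`-subspaces. -/
def desarguesianSpread (F K W : Type*) [Ring F] [DivisionRing K] [AddCommGroup W] [Module K W]
    [Module F W] [SMul F K] [IsScalarTower F K W] : Set (Submodule F W) :=
  {L | ∃ w : W, w ≠ 0 ∧ L = (K ∙ w).restrictScalars F}

theorem isSpread_desarguesianSpread (F K W : Type*) [Ring F] [DivisionRing K] [AddCommGroup W]
    [Module K W] [Module F W] [SMul F K] [IsScalarTower F K W] :
    IsSpread (desarguesianSpread F K W) := by
  intro v hv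
  refine ⟨_, ⟨⟨v, hv, rfl⟩, Submodule.mem_span_singleton_self v⟩, ?_⟩
  rintro _ ⟨⟨w, -, rfl⟩, hvw⟩
  obtain ⟨c, rfl⟩ := Submodule.mem_span_singleton.1 hvw
  have hc : c ≠ 0 := by
    rintro rfl
    exact hv (zero_smul K w)
  rw [Submodule.span_singleton_smul_eq (IsUnit.mk0 c hc)]

/-- The determinant form on the plane `K × K`. -/
def planeDet (K : Type*) [CommRing K] : K × K →ₗ[K] K × K →ₗ[K] K :=
  LinearMap.mk₂ K (fun x y => x.1 * y.2 - x.2 * y.1)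
    (fun _ _ _ => by dsimp; ring) (fun _ _ _ => by dsimp; ring)
    (fun _ _ _ => by dsimp; ring) (fun _ _ _ => by dsimp; ring)

theorem isSymplectic_planeDet (K : Type*) [CommRing K] : IsSymplectic (planeDet K) := by
  refine ⟨fun v => by simp [planeDet, mul_comm], fun v hv => ?_⟩
  contrapose! hv
  have h₁ := hv (0, 1)
  have h₂ := hv (1, 0)
  ext <;> simp_all [planeDet]

theorem IsSymplectic.exists_isSpread_isLagrangian {F V : Type*} (K : Type*) [Field F]
    [AddCommGroup V] [Module F V] [Field K] [Algebra F K] [FiniteDimensional F K]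
    {B : V →ₗ[F] V →ₗ[F] F} (hB : IsSymplectic B)
    (hdim : Module.finrank F V = 2 * Module.finrank F K) :
    ∃ 𝒜 : Set (Submodule F V), IsSpread 𝒜 ∧ ∀ L ∈ 𝒜, IsLagrangian B L := by
  have hK : 0 < Module.finrank F K := Module.finrank_pos
  have : FiniteDimensional F V := Module.finite_of_finrank_pos (by lia)
  obtain ⟨t, ht⟩ := exists_ne (0 : Module.Dual F K)
  have hD := isSymplectic_planeDet K
  obtain ⟨φ, hφ⟩ := (hD.fieldReduction ht).exists_isometry hB
    (by rw [hdim, Module.finrank_prod, two_mul])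
  refine ⟨_, (isSpread_desarguesianSpread F K (K × K)).map φ, ?_⟩
  rintro _ ⟨_, ⟨w, hw, rfl⟩, rfl⟩
  have hline : IsLagrangian (planeDet K) (K ∙ w) :=
    hD.isLagrangian_span_singleton (by simp) hw
  exact (hline.fieldReduction ht).map φ hφ

end DesarguesianSpread

theorem exists_field_extension_finrank_eq (F : Type*) [Field F] [Finite F] {n : ℕ} (hn : 0 < n) :
    ∃ (K : Type) (_ : Field K) (_ : Algebra F K), FiniteDimensional F K ∧
      Module.finrank F K = n := by
  obtain ⟨p, _⟩ := CharP.exists F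
  have : Fact p.Prime := ⟨CharP.char_is_prime F p⟩
  have : NeZero n := ⟨hn.ne'⟩
  exact ⟨FiniteField.Extension F p n, inferInstance, inferInstance, inferInstance,
    FiniteField.finrank_extension F p n⟩

theorem symplectic_spread_exists_general {F : Type*} [Field F] [Finite F] {J : ℕ} (hJ : 0 < J)
    {V : Type*} [AddCommGroup V] [Module F V] (hdim : Module.finrank F V = 2 * J)
    (B : V →ₗ[F] V →ₗ[F] F) (hB : IsSymplectic B) :
    ∃ 𝒜 : Set (Submodule F V),
      𝒜.ncard = Nat.card F ^ J + 1 ∧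
      (∀ L ∈ 𝒜, IsLagrangian B L) ∧
      IsSpread 𝒜 ∧
      (cosetBlocks 𝒜).ncard = Nat.card F ^ J * (Nat.card F ^ J + 1) ∧
      (∀ A ∈ cosetBlocks 𝒜, A.ncard = Nat.card F ^ J) ∧
      ∀ x y : V, x ≠ y → ∃! A, A ∈ cosetBlocks 𝒜 ∧ x ∈ A ∧ y ∈ A := by
  obtain ⟨K, _, _, _, hK⟩ := exists_field_extension_finrank_eq F hJ
  have : FiniteDimensional F V := Module.finite_of_finrank_pos (by lia)
  obtain ⟨𝒜, hspread, hlag⟩ := hB.exists_isSpread_isLagrangian K (by rw [hdim, hK])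
  have hcardL (L) (hL : L ∈ 𝒜) : Nat.card L = Nat.card F ^ J := by
    have hfinrank := (hlag L hL).two_mul_finrank hB
    rw [Module.natCard_eq_pow_finrank (K := F), show Module.finrank F L = J by lia]
  have hcardV : Nat.card V = (Nat.card F ^ J) ^ 2 := by
    rw [Module.natCard_eq_pow_finrank (K := F), hdim, mul_comm, pow_mul]
  have hq : 1 < Nat.card F ^ J := Nat.one_lt_pow hJ.ne' Finite.one_lt_card
  exact ⟨𝒜, hspread.ncard_eq hcardL hq hcardV, hlag, hspread,
    hspread.ncard_cosetBlocks_eq hcardL hq hcardV, fun _ => ncard_of_mem_cosetBlocks hcardL,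
    fun _ _ => hspread.existsUnique_mem_cosetBlocks⟩

/-- Every symplectic `2J`-dimensional space over `F_P` admits a
symplectic spread: `P^J + 1` Lagrangian subspaces partitioning the nonzero
vectors; the cosets of its members form an affine plane of order `P^J`. -/
theorem symplectic_spread_exists
    {P J : ℕ} [Fact (Nat.Prime P)] (hJ : 0 < J)
    {V : Type*} [AddCommGroup V] [Module (ZMod P) V] [Fintype V]
    (hdim : Module.finrank (ZMod P) V = 2 * J)
    (B : V →ₗ[ZMod P] V →ₗ[ZMod P] ZMod P) (hB : IsSymplectic B) :
    ∃ 𝒜 : Set (Submodule (ZMod P) V),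
      𝒜.ncard = P ^ J + 1 ∧
      (∀ L ∈ 𝒜, IsLagrangian B L) ∧
      (∀ v : V, v ≠ 0 → ∃! L, L ∈ 𝒜 ∧ v ∈ L) ∧
      {A : Set V | ∃ v : V, ∃ L ∈ 𝒜,
          A = (fun x => v + x) '' (L : Set V)}.ncard = P ^ J * (P ^ J + 1) ∧
      (∀ A ∈ {A : Set V | ∃ v : V, ∃ L ∈ 𝒜, A = (fun x => v + x) '' (L : Set V)},
        A.ncard = P ^ J) ∧
      (∀ x y : V, x ≠ y →
        ∃! A : Set V,
          (A ∈ {A : Set V | ∃ v : V, ∃ L ∈ 𝒜, A = (fun x => v + x) '' (L : Set V)}) ∧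
          x ∈ A ∧ y ∈ A) := by
  simpa only [Nat.card_zmod, IsSpread, cosetBlocks] using
    symplectic_spread_exists_general hJ hdim B hB
end
end
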